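/- arXiv:2311.05116 — 4 statements merged into one kernel-verified Lean document; each statement's English description precedes it below -/
import Mathlib

section
/- There exist absolute constants c₁, c₂ ≥ 1 with the following property. Let d ≥ 1 and n_1, …, n_d ≥ 2 be integers, let r be an integer with 1 ≤ r ≤ min_i n_i, let t > 0 and 0 < ε ≤ 2t. Let V be the set of tensors T ∈ ℝ^{n_1×⋯×n_d} of CP rank at most r with Frobenius norm ‖T‖_F ≤ t. Then there exists a finite subset F ⊆ V with log |F| ≤ r·(Σ_{i=1}^d n_i)·log(c₁·d·t/ε) + c₂·d²·r²·log r − d·r²·log c₁ such that every T ∈ V lies within Frobenius distance ε of some element of F. -/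
/-- A tensor `T ∈ ℝ^{n₁ × ⋯ × n_d}` has CP rank at most `r` if it is a sum of `r`
rank-one (elementary) tensors. -/
def CPRankLE {d : ℕ} {n : Fin d → ℕ} (r : ℕ)
    (T : EuclideanSpace ℝ ((i : Fin d) → Fin (n i))) : Prop :=
  ∃ a : Fin r → (i : Fin d) → Fin (n i) → ℝ,
    ∀ k : (i : Fin d) → Fin (n i), T k = ∑ j : Fin r, ∏ i : Fin d, a j i (k i)

/-!
The factors of a tensor of CP rank at most `r` span subspaces `U i` of dimension at most `r`. The
tuples of `r`-dimensional subspaces have small nets, coming from nets of isometries `ℝ^r → ℝ^{n_i}`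
and then from charts of the Grassmannians, and moving the subspaces moves the tensor by a
controlled amount, one mode at a time.

It remains to cover the tensors of norm at most `t` whose factors lie in fixed subspaces, a set
parametrized by `d * r ^ 2` real coordinates that need not be bounded in terms of the tensor. For an
`ε`-separated subset of size `M`, a Chebyshev polynomial of degree `m ≈ (t / ε) * log M` in the
squared distance gives a diagonally dominant matrix, so `M` is at most the dimension of a space of
polynomials of degree `O(m)` in the coordinates. This leaves a factor `log M` in the base of the
bound. Only monomials that have, in each rank-one term, the same degree in all `d` factors occur,
which reduces the exponent from `d * r ^ 2` to `d * r ^ 2 - (d - 1) * r`, and for `d ≥ 2` the gap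
absorbs the factor `log M`. For `d = 1` a volumetric net suffices.
-/

open Module Metric
open scoped Pointwise

section Nets

variable {X : Type*} [PseudoMetricSpace X]

/-- `A` has an inner `ε`-net with at most `B` points: the inequality `N(A, ε) ≤ B` for the inner
covering number, with real parameters. -/
def HasNet (A : Set X) (ε B : ℝ) : Prop :=
  ∃ F : Finset X, ↑F ⊆ A ∧ (F.card : ℝ) ≤ B ∧ ∀ x ∈ A, ∃ y ∈ F, dist x y ≤ ε

theorem HasNet.mono {A : Set X} {ε B B' : ℝ} (h : HasNet A ε B) (hB : B ≤ B') : HasNet A ε B' :=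
  let ⟨F, hFA, hFcard, hF⟩ := h
  ⟨F, hFA, hFcard.trans hB, hF⟩

theorem hasNet_of_separated_card_le {A : Set X} {ε B : ℝ} (hε : 0 ≤ ε)
    (h : ∀ s : Finset X, ↑s ⊆ A → (s : Set X).Pairwise (ε < dist · ·) → (s.card : ℝ) ≤ B) :
    HasNet A ε B := by
  lift ε to NNReal using hε
  have hB : 0 ≤ B := by simpa using h ∅ (by simp) (by simp)
  have hsep : ∀ s : Finset X, ↑s ⊆ A → IsSeparated ε (s : Set X) → s.card ≤ ⌊B⌋₊ :=
    fun s hsA hs => Nat.le_floor <| h s hsA <| hs.mono' fun x y hxy => by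
      rwa [edist_nndist, ENNReal.coe_lt_coe] at hxy
  have hpack : packingNumber ε A ≤ ⌊B⌋₊ := by
    refine iSup_le fun C => iSup₂_le fun hCA hC => ?_
    by_contra! hlt
    obtain ⟨s, hsC, hs⟩ := Set.exists_subset_encard_eq (Order.add_one_le_of_lt hlt)
    lift s to Finset X using Set.finite_of_encard_eq_coe (k := ⌊B⌋₊ + 1) (by exact_mod_cast hs)
    rw [Set.encard_coe_eq_coe_finsetCard] at hs
    have := hsep s (hsC.trans hCA) (hC.subset hsC)
    norm_cast at hs
    omega
  have htop : packingNumber ε A ≠ ⊤ := ne_top_of_le_ne_top (ENat.natCast_ne_top _) hpack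
  have hcard := encard_maximalSeparatedSet htop ▸ hpack
  obtain ⟨F, hF⟩ := (Set.finite_of_encard_le_coe hcard).exists_finset_coe
  rw [← hF, Set.encard_coe_eq_coe_finsetCard, Nat.cast_le] at hcard
  refine ⟨F, hF ▸ maximalSeparatedSet_subset, (Nat.le_floor_iff hB).1 hcard, fun x hx => ?_⟩
  obtain ⟨y, hy, hxy⟩ := isCover_maximalSeparatedSet htop hx
  refine ⟨y, by rwa [← Finset.mem_coe, hF], ?_⟩
  replace hxy : edist x y ≤ ε := hxy
  rwa [edist_nndist, ENNReal.coe_le_coe] at hxy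

theorem HasNet.of_biUnion {I : Type*} {A : Set X} {ε₁ ε₂ B : ℝ} {G : Finset I} {V : I → Set X}
    (hV : ∀ g ∈ G, V g ⊆ A) (hnet : ∀ g ∈ G, HasNet (V g) ε₂ B)
    (hcover : ∀ x ∈ A, ∃ g ∈ G, ∃ y ∈ V g, dist x y ≤ ε₁) :
    HasNet A (ε₁ + ε₂) (G.card * B) := by
  classical
  choose! N hNV hNcard hN using hnet
  refine ⟨G.biUnion N, ?_, ?_, fun x hx => ?_⟩
  · simpa using fun g hg => (hNV g hg).trans (hV g hg)
  · calc ((G.biUnion N).card : ℝ) ≤ ∑ g ∈ G, ((N g).card : ℝ) := by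
          exact_mod_cast Finset.card_biUnion_le
      _ ≤ G.card * B := by simpa using Finset.sum_le_card_nsmul G _ B hNcard
  · obtain ⟨g, hg, y, hy, hxy⟩ := hcover x hx
    obtain ⟨z, hz, hyz⟩ := hN g hg y hy
    exact ⟨z, Finset.mem_biUnion.2 ⟨g, hg, hz⟩,
      (dist_triangle x y z).trans (add_le_add hxy hyz)⟩

end Nets

section Volumetric

variable {E : Type*} [NormedAddCommGroup E] [NormedSpace ℝ E] [FiniteDimensional ℝ E]

theorem card_le_of_separated_of_norm_le {R δ : ℝ} (hR : 0 ≤ R) (hδ : 0 < δ)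
    {s : Finset E} (hs : ∀ x ∈ s, ‖x‖ ≤ R) (hsep : (s : Set E).Pairwise (δ < dist · ·)) :
    (s.card : ℝ) ≤ (1 + 2 * R / δ) ^ finrank ℝ E := by
  borelize E
  let μ : MeasureTheory.Measure E := MeasureTheory.Measure.addHaar
  have hfin (x : E) (ρ : ℝ) : μ (closedBall x ρ) ≠ ⊤ :=
    MeasureTheory.measure_closedBall_lt_top.ne
  have hdisj : (s : Set E).PairwiseDisjoint (closedBall · (δ / 2)) := fun x hx y hy hxy =>
    closedBall_disjoint_closedBall (by simpa using hsep hx hy hxy)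
  have hsub : ⋃ x ∈ s, closedBall x (δ / 2) ⊆ closedBall 0 (R + δ / 2) :=
    Set.iUnion₂_subset fun x hx => closedBall_subset_closedBall' <| by
      linarith [hs x hx, dist_zero_right x]
  have hvol : s.card * (δ / 2) ^ finrank ℝ E * μ.real (ball 0 1) ≤
      (R + δ / 2) ^ finrank ℝ E * μ.real (ball 0 1) := by
    calc s.card * (δ / 2) ^ finrank ℝ E * μ.real (ball 0 1)
        = ∑ x ∈ s, μ.real (closedBall x (δ / 2)) := by
          simp [μ.addHaar_real_closedBall _ (half_pos hδ).le, mul_assoc]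
      _ = μ.real (⋃ x ∈ s, closedBall x (δ / 2)) :=
          (MeasureTheory.measureReal_biUnion_finset hdisj
            (fun _ _ => measurableSet_closedBall) fun _ _ => hfin _ _).symm
      _ ≤ μ.real (closedBall 0 (R + δ / 2)) := MeasureTheory.measureReal_mono hsub (hfin _ _)
      _ = _ := μ.addHaar_real_closedBall _ (by positivity)
  have hball : 0 < μ.real (ball 0 1) :=
    ENNReal.toReal_pos (measure_ball_pos μ 0 one_pos).ne' MeasureTheory.measure_ball_lt_top.ne
  calc (s.card : ℝ) ≤ (R + δ / 2) ^ finrank ℝ E / (δ / 2) ^ finrank ℝ E :=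
        (le_div_iff₀ (by positivity)).2 (le_of_mul_le_mul_right hvol hball)
    _ = (1 + 2 * R / δ) ^ finrank ℝ E := by
        rw [← div_pow]
        congr 1
        field_simp
        ring

theorem hasNet_of_norm_le {R δ : ℝ} (hR : 0 ≤ R) (hδ : 0 < δ) {A : Set E}
    (hA : ∀ x ∈ A, ‖x‖ ≤ R) : HasNet A δ ((1 + 2 * R / δ) ^ finrank ℝ E) :=
  hasNet_of_separated_card_le hδ.le fun _ hs hsep =>
    card_le_of_separated_of_norm_le hR hδ (fun x hx => hA x (hs hx)) hsep

end Volumetric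

section Subspaces

theorem exists_submodule_ge_finrank_eq {K V : Type*} [Field K] [AddCommGroup V] [Module K V]
    [FiniteDimensional K V] (W : Submodule K V) {m : ℕ} (hWm : finrank K W ≤ m)
    (hmV : m ≤ finrank K V) : ∃ U : Submodule K V, W ≤ U ∧ finrank K U = m := by
  induction m, hWm using Nat.le_induction with
  | base => exact ⟨W, le_rfl, rfl⟩
  | succ m _ ih =>
    obtain ⟨U, hWU, rfl⟩ := ih (Nat.le_of_succ_le hmV)
    obtain ⟨x, hx⟩ : ∃ x, x ∉ U := by
      by_contra! h
      rw [Submodule.eq_top_iff'.2 h, finrank_top] at hmV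
      omega
    exact ⟨U ⊔ K ∙ x, hWU.trans le_sup_left, Submodule.finrank_sup_span_singleton hx⟩

theorem finrank_continuousLinearMap {E F : Type*} [NormedAddCommGroup E] [NormedSpace ℝ E]
    [FiniteDimensional ℝ E] [NormedAddCommGroup F] [NormedSpace ℝ F] [FiniteDimensional ℝ F] :
    finrank ℝ (E →L[ℝ] F) = finrank ℝ E * finrank ℝ F := by
  rw [← finrank_linearMap ℝ ℝ E F]
  exact (LinearMap.toContinuousLinearMap (𝕜 := ℝ) (E := E) (F' := F)).finrank_eq.symm

/-- The one-sided gap from `U` to `U'` is at most `δ`: every unit vector of `U` is within `δ`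
of `U'`. -/
def GapLE {H : Type*} [SeminormedAddCommGroup H] [Module ℝ H] (δ : ℝ) (U U' : Submodule ℝ H) :
    Prop :=
  ∀ x ∈ U, ∃ y ∈ U', ‖x - y‖ ≤ δ * ‖x‖

variable {H : Type*} [NormedAddCommGroup H] [InnerProductSpace ℝ H] {δ : ℝ}
  {U U' : Submodule ℝ H}

theorem GapLE.norm_sub_starProjection_le [U'.HasOrthogonalProjection] (h : GapLE δ U U') {x : H}
    (hx : x ∈ U) : ‖x - U'.starProjection x‖ ≤ δ * ‖x‖ := by
  obtain ⟨y, hy, hxy⟩ := h x hx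
  rw [U'.starProjection_minimal]
  exact (ciInf_le ⟨0, by rintro _ ⟨w, rfl⟩; exact norm_nonneg _⟩ ⟨y, hy⟩).trans hxy

theorem exists_finset_gapLE_half [FiniteDimensional ℝ H] (r : ℕ) :
    ∃ G : Finset (Submodule ℝ H), (∀ U ∈ G, finrank ℝ U = r) ∧
      (G.card : ℝ) ≤ 5 ^ (r * finrank ℝ H) ∧
      ∀ U : Submodule ℝ H, finrank ℝ U = r → ∃ U₀ ∈ G, GapLE (1 / 2) U U₀ := by
  classical
  let I : Set (EuclideanSpace ℝ (Fin r) →L[ℝ] H) := {Q | ∀ v, ‖Q v‖ = ‖v‖}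
  have hI (Q) (hQ : Q ∈ I) : ‖Q‖ ≤ 1 :=
    Q.opNorm_le_bound one_pos.le fun v => by rw [hQ, one_mul]
  obtain ⟨N, hNI, hNcard, hN⟩ := hasNet_of_norm_le one_pos.le one_half_pos hI
  refine ⟨N.image fun Q => Q.range, ?_, ?_, fun U hU => ?_⟩
  · simp only [Finset.forall_mem_image]
    intro Q hQ
    have hQinj : Function.Injective Q := (injective_iff_map_eq_zero Q).2 fun v hv => by
      rw [← norm_eq_zero, ← hNI hQ v, hv, norm_zero]
    simpa using LinearMap.finrank_range_of_inj (f := Q.toLinearMap) hQinj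
  · rw [finrank_continuousLinearMap, finrank_euclideanSpace_fin] at hNcard
    norm_num at hNcard
    exact le_trans (mod_cast Finset.card_image_le) hNcard
  · let q : EuclideanSpace ℝ (Fin r) →ₗᵢ[ℝ] H := U.subtypeₗᵢ.comp
      ((stdOrthonormalBasis ℝ U).reindex (finCongr hU)).repr.symm.toLinearIsometry
    obtain ⟨Q, hQN, hqQ⟩ := hN q.toContinuousLinearMap q.norm_map
    refine ⟨Q.range, Finset.mem_image_of_mem _ hQN, fun x hx => ?_⟩
    obtain ⟨v, rfl⟩ : ∃ v, q v = x :=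
      ⟨((stdOrthonormalBasis ℝ U).reindex (finCongr hU)).repr ⟨x, hx⟩, by simp [q]⟩
    refine ⟨Q v, ⟨v, rfl⟩, ?_⟩
    rw [q.norm_map]
    exact ((q.toContinuousLinearMap - Q).le_opNorm v).trans (by rw [← dist_eq_norm]; gcongr)

/-- The graph of `Z : U₀ → U₀ᗮ`, as a subspace of the ambient space: the standard affine chart of
the Grassmannian at `U₀`. -/
noncomputable def graphOver {U₀ : Submodule ℝ H} (Z : U₀ →L[ℝ] U₀ᗮ) : Submodule ℝ H :=
  LinearMap.range (U₀.subtype + U₀ᗮ.subtype ∘ₗ Z.toLinearMap)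

variable {U₀ : Submodule ℝ H}

theorem finrank_graphOver (Z : U₀ →L[ℝ] U₀ᗮ) : finrank ℝ (graphOver Z) = finrank ℝ U₀ := by
  refine LinearMap.finrank_range_of_inj <| (injective_iff_map_eq_zero _).2 fun u hu => ?_
  have hinner : inner ℝ (u : H) (u + Z u : H) = 0 := by
    rw [show (u + Z u : H) = 0 from hu, inner_zero_right]
  rw [inner_add_right, U₀.inner_right_of_mem_orthogonal u.2 (Z u).2, add_zero,
    inner_self_eq_zero] at hinner
  exact Subtype.ext hinner

theorem gapLE_graphOver (Z Z' : U₀ →L[ℝ] U₀ᗮ) :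
    GapLE (dist Z Z') (graphOver Z) (graphOver Z') := by
  rintro _ ⟨u, rfl⟩
  refine ⟨_, ⟨u, rfl⟩, ?_⟩
  change ‖(u + Z u : H) - (u + Z' u)‖ ≤ _ * ‖(u + Z u : H)‖
  have hu : ‖u‖ ≤ ‖(u + Z u : H)‖ := by
    have := norm_add_sq_eq_norm_sq_add_norm_sq_real
      (U₀.inner_right_of_mem_orthogonal u.2 (Z u).2)
    rw [Submodule.coe_norm, ← sq_le_sq₀ (norm_nonneg _) (norm_nonneg _)]
    nlinarith
  calc ‖(u + Z u : H) - (u + Z' u)‖ = ‖(Z - Z') u‖ := by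
        simp [Submodule.coe_norm]
    _ ≤ dist Z Z' * ‖u‖ := dist_eq_norm Z Z' ▸ (Z - Z').le_opNorm u
    _ ≤ _ := by gcongr

theorem GapLE.exists_graphOver_eq [FiniteDimensional ℝ H] (h : GapLE (1 / 2) U U₀)
    (hU : finrank ℝ U = finrank ℝ U₀) : ∃ Z : U₀ →L[ℝ] U₀ᗮ, ‖Z‖ ≤ 1 ∧ graphOver Z = U := by
  let P : U →ₗ[ℝ] U₀ := U₀.orthogonalProjectionOnto.toLinearMap ∘ₗ U.subtype
  have hP (x : U) : ‖(x : H) - P x‖ ≤ 1 / 2 * ‖x‖ := h.norm_sub_starProjection_le x.2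
  have hPx (x : U) : ‖x‖ ≤ 2 * ‖P x‖ := by
    have := norm_le_norm_add_norm_sub (P x : H) x
    rw [norm_sub_rev] at this
    simp only [Submodule.coe_norm] at this hP ⊢
    linarith [hP x]
  have hPinj : Function.Injective P := (injective_iff_map_eq_zero P).2 fun x hx =>
    norm_le_zero_iff.1 (by simpa [hx] using hPx x)
  let e : U ≃ₗ[ℝ] U₀ := P.linearEquivOfInjective hPinj hU
  have he (u : U₀) : P (e.symm u) = u := e.apply_symm_apply u
  let Z : U₀ →L[ℝ] U₀ᗮ := LinearMap.toContinuousLinearMap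
    (U₀ᗮ.orthogonalProjectionOnto.toLinearMap ∘ₗ U.subtype ∘ₗ e.symm.toLinearMap)
  have hZ (u : U₀) : (Z u : H) = e.symm u - u := by
    have hsplit := U₀.starProjection_add_starProjection_orthogonal (e.symm u : H)
    have hproj : U₀.starProjection (e.symm u : H) = u := congrArg Subtype.val (he u)
    rw [← hsplit, hproj, add_sub_cancel_left]
    rfl
  refine ⟨Z, Z.opNorm_le_bound one_pos.le fun u => ?_, ?_⟩
  · rw [Submodule.coe_norm, hZ, one_mul]
    have := hP (e.symm u)
    have := hPx (e.symm u)
    simp only [he] at *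
    linarith
  · refine Submodule.eq_of_le_of_finrank_eq ?_ ((finrank_graphOver Z).trans hU.symm)
    rintro _ ⟨u, rfl⟩
    change (u + Z u : H) ∈ U
    rw [hZ, add_sub_cancel]
    exact (e.symm u).2

theorem exists_finset_gapLE_near [FiniteDimensional ℝ H] (U₀ : Submodule ℝ H) (hδ : 0 < δ) :
    ∃ G : Finset (Submodule ℝ H), (∀ U ∈ G, finrank ℝ U = finrank ℝ U₀) ∧
      (G.card : ℝ) ≤ (1 + 2 / δ) ^ (finrank ℝ U₀ * (finrank ℝ H - finrank ℝ U₀)) ∧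
      ∀ U : Submodule ℝ H, finrank ℝ U = finrank ℝ U₀ → GapLE (1 / 2) U U₀ →
        ∃ U' ∈ G, GapLE δ U U' := by
  classical
  obtain ⟨N, -, hNcard, hN⟩ :=
    hasNet_of_norm_le (A := {Z : U₀ →L[ℝ] U₀ᗮ | ‖Z‖ ≤ 1}) one_pos.le hδ fun _ hZ => hZ
  refine ⟨N.image graphOver, ?_, ?_, fun U hU hUU₀ => ?_⟩
  · simp only [Finset.forall_mem_image]
    exact fun Z _ => finrank_graphOver Z
  · rw [finrank_continuousLinearMap, mul_one,
      show finrank ℝ U₀ᗮ = finrank ℝ H - finrank ℝ U₀ by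
        have := U₀.finrank_add_finrank_orthogonal; omega] at hNcard
    exact le_trans (mod_cast Finset.card_image_le) hNcard
  · obtain ⟨Z, hZ, rfl⟩ := hUU₀.exists_graphOver_eq hU
    obtain ⟨Z', hZ'N, hZZ'⟩ := hN Z hZ
    refine ⟨graphOver Z', Finset.mem_image_of_mem _ hZ'N, fun x hx => ?_⟩
    obtain ⟨y, hy, hxy⟩ := gapLE_graphOver Z Z' x hx
    exact ⟨y, hy, hxy.trans (by gcongr)⟩

theorem exists_finset_gapLE [FiniteDimensional ℝ H] (r : ℕ) (hδ : 0 < δ) :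
    ∃ G : Finset (Submodule ℝ H), (∀ U ∈ G, finrank ℝ U = r) ∧
      (G.card : ℝ) ≤ 5 ^ (r * finrank ℝ H) * (1 + 2 / δ) ^ (r * (finrank ℝ H - r)) ∧
      ∀ U : Submodule ℝ H, finrank ℝ U = r → ∃ U' ∈ G, GapLE δ U U' := by
  classical
  obtain ⟨G, hGr, hGcard, hG⟩ := exists_finset_gapLE_half (H := H) r
  choose N hNr hNcard hN using fun U₀ : Submodule ℝ H => exists_finset_gapLE_near U₀ hδ
  refine ⟨G.biUnion N, ?_, ?_, fun U hU => ?_⟩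
  · simp only [Finset.mem_biUnion]
    rintro U ⟨U₀, hU₀, hU⟩
    rw [hNr U₀ U hU, hGr U₀ hU₀]
  · calc ((G.biUnion N).card : ℝ) ≤ ∑ U₀ ∈ G, ((N U₀).card : ℝ) := by
          exact_mod_cast Finset.card_biUnion_le
      _ ≤ G.card * (1 + 2 / δ) ^ (r * (finrank ℝ H - r)) := by
          rw [← nsmul_eq_mul]
          exact Finset.sum_le_card_nsmul _ _ _ fun U₀ hU₀ => hGr U₀ hU₀ ▸ hNcard U₀
      _ ≤ _ := by gcongr
  · obtain ⟨U₀, hU₀, hUU₀⟩ := hG U hU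
    obtain ⟨U', hU', hUU'⟩ := hN U₀ U (hU.trans (hGr U₀ hU₀).symm) hUU₀
    exact ⟨U', Finset.mem_biUnion.2 ⟨U₀, hU₀, hU'⟩, hUU'⟩

end Subspaces

section Tensors

variable {ι ρ : Type*} {κ : ι → Type*} [Fintype ι] [Fintype ρ]

/-- The tensor `∑ j, a j i₁ ⊗ ⋯ ⊗ a j i_d`, with modes indexed by `ι` and rank-one terms indexed
by `ρ`. -/
noncomputable def cpTensor (a : ρ → (i : ι) → EuclideanSpace ℝ (κ i)) :
    EuclideanSpace ℝ ((i : ι) → κ i) :=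
  WithLp.toLp 2 fun k => ∑ j, ∏ i, a j i (k i)

variable (ρ) in
/-- The tensors that are sums of `ρ`-many rank-one tensors whose `i`-th factors lie in `U i`. -/
def cpTensorsIn (U : (i : ι) → Submodule ℝ (EuclideanSpace ℝ (κ i))) :
    Set (EuclideanSpace ℝ ((i : ι) → κ i)) :=
  {T | ∃ a : ρ → (i : ι) → EuclideanSpace ℝ (κ i), (∀ j i, a j i ∈ U i) ∧ cpTensor a = T}

theorem cpRankLE_iff_exists_cpTensor_eq {d : ℕ} {n : Fin d → ℕ} {r : ℕ}
    {T : EuclideanSpace ℝ ((i : Fin d) → Fin (n i))} :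
    CPRankLE r T ↔ ∃ a : Fin r → (i : Fin d) → EuclideanSpace ℝ (Fin (n i)), cpTensor a = T := by
  constructor
  · rintro ⟨a, ha⟩
    exact ⟨fun j i => WithLp.toLp 2 (a j i), PiLp.ext fun k => (ha k).symm⟩
  · rintro ⟨a, rfl⟩
    exact ⟨fun j i => a j i, fun _ => rfl⟩

theorem cpRankLE_of_mem_cpTensorsIn {d : ℕ} {n : Fin d → ℕ} {r : ℕ}
    {T : EuclideanSpace ℝ ((i : Fin d) → Fin (n i))}
    {U : (i : Fin d) → Submodule ℝ (EuclideanSpace ℝ (Fin (n i)))}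
    (hT : T ∈ cpTensorsIn (Fin r) U) : CPRankLE r T :=
  let ⟨a, _, haT⟩ := hT
  cpRankLE_iff_exists_cpTensor_eq.2 ⟨a, haT⟩

theorem CPRankLE.exists_mem_cpTensorsIn {d : ℕ} {n : Fin d → ℕ} {r : ℕ}
    {T : EuclideanSpace ℝ ((i : Fin d) → Fin (n i))} (hT : CPRankLE r T) (hr : ∀ i, r ≤ n i) :
    ∃ U : (i : Fin d) → Submodule ℝ (EuclideanSpace ℝ (Fin (n i))),
      (∀ i, finrank ℝ (U i) = r) ∧ T ∈ cpTensorsIn (Fin r) U := by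
  obtain ⟨a, rfl⟩ := cpRankLE_iff_exists_cpTensor_eq.1 hT
  have hspan (i : Fin d) : finrank ℝ (Submodule.span ℝ (Set.range (a · i))) ≤ r := by
    simpa [Set.finrank] using finrank_range_le_card (R := ℝ) (a · i)
  choose U hU hUr using fun i =>
    exists_submodule_ge_finrank_eq _ (hspan i) ((hr i).trans_eq finrank_euclideanSpace_fin.symm)
  exact ⟨U, hUr, a, fun j i => hU i (Submodule.subset_span (Set.mem_range_self j)), rfl⟩

variable [DecidableEq ι]

/-- The mode-`i` fibre of `T` at `k'`: the vector of entries of `T` whose indices in the modes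
other than `i` are given by `k'`. -/
noncomputable def modeFiber (T : EuclideanSpace ℝ ((i : ι) → κ i)) (i : ι)
    (k' : (i' : {i' // i' ≠ i}) → κ i') : EuclideanSpace ℝ (κ i) :=
  WithLp.toLp 2 fun l => T ((Equiv.piSplitAt i κ).symm (l, k'))

theorem modeFiber_cpTensor (a : ρ → (i : ι) → EuclideanSpace ℝ (κ i)) (i : ι)
    (k' : (i' : {i' // i' ≠ i}) → κ i') :
    modeFiber (cpTensor a) i k' = ∑ j, (∏ i' : {i' // i' ≠ i}, a j i' (k' i')) • a j i := by
  ext l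
  simp only [modeFiber, cpTensor, WithLp.ofLp_sum, Finset.sum_apply, PiLp.smul_apply, smul_eq_mul]
  refine Finset.sum_congr rfl fun j _ => ?_
  rw [Fintype.prod_eq_mul_prod_subtype_ne _ i, mul_comm]
  congr 1
  · exact Finset.prod_congr rfl fun i' _ => by simp [Equiv.piSplitAt, i'.2]
  · simp [Equiv.piSplitAt]

theorem modeFiber_cpTensor_update_map (a : ρ → (i : ι) → EuclideanSpace ℝ (κ i)) (i : ι)
    (k' : (i' : {i' // i' ≠ i}) → κ i')
    (P : EuclideanSpace ℝ (κ i) →L[ℝ] EuclideanSpace ℝ (κ i)) :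
    modeFiber (cpTensor fun j => Function.update (a j) i (P (a j i))) i k' =
      P (modeFiber (cpTensor a) i k') := by
  simp only [modeFiber_cpTensor, map_sum, map_smul, Function.update_self]
  refine Finset.sum_congr rfl fun j _ => ?_
  congr 1
  exact Finset.prod_congr rfl fun i' _ => by rw [Function.update_of_ne i'.2]

variable [∀ i, Fintype (κ i)]

theorem norm_sq_eq_sum_norm_sq_modeFiber (T : EuclideanSpace ℝ ((i : ι) → κ i)) (i : ι) :
    ‖T‖ ^ 2 = ∑ k', ‖modeFiber T i k'‖ ^ 2 := by
  simp only [EuclideanSpace.real_norm_sq_eq]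
  rw [← (Equiv.piSplitAt i κ).symm.sum_comp, Fintype.sum_prod_type_right]
  rfl

theorem norm_le_mul_norm_of_modeFiber {S T : EuclideanSpace ℝ ((i : ι) → κ i)} (i : ι) {c : ℝ}
    (hc : 0 ≤ c) (h : ∀ k', ‖modeFiber S i k'‖ ≤ c * ‖modeFiber T i k'‖) : ‖S‖ ≤ c * ‖T‖ := by
  rw [← sq_le_sq₀ (norm_nonneg _) (by positivity), mul_pow,
    norm_sq_eq_sum_norm_sq_modeFiber S i, norm_sq_eq_sum_norm_sq_modeFiber T i, Finset.mul_sum]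
  gcongr with k'
  rw [← mul_pow]
  gcongr
  exact h k'

variable {δ : ℝ} {a : ρ → (i : ι) → EuclideanSpace ℝ (κ i)}

theorem norm_cpTensor_update_map_le (i : ι)
    {P : EuclideanSpace ℝ (κ i) →L[ℝ] EuclideanSpace ℝ (κ i)} (hP : ∀ v, ‖P v‖ ≤ ‖v‖) :
    ‖cpTensor fun j => Function.update (a j) i (P (a j i))‖ ≤ ‖cpTensor a‖ := by
  simpa using norm_le_mul_norm_of_modeFiber i zero_le_one fun k' => by
    rw [modeFiber_cpTensor_update_map, one_mul]
    exact hP _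

theorem norm_cpTensor_sub_update_map_le {i : ι} {U : Submodule ℝ (EuclideanSpace ℝ (κ i))}
    (ha : ∀ j, a j i ∈ U) (hδ : 0 ≤ δ) {P : EuclideanSpace ℝ (κ i) →L[ℝ] EuclideanSpace ℝ (κ i)}
    (hP : ∀ v ∈ U, ‖v - P v‖ ≤ δ * ‖v‖) :
    ‖cpTensor a - cpTensor fun j => Function.update (a j) i (P (a j i))‖ ≤
      δ * ‖cpTensor a‖ := by
  refine norm_le_mul_norm_of_modeFiber i hδ fun k' => ?_
  have hsub : modeFiber (cpTensor a - cpTensor fun j => Function.update (a j) i (P (a j i))) i k' =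
      modeFiber (cpTensor a) i k' - P (modeFiber (cpTensor a) i k') := by
    rw [← modeFiber_cpTensor_update_map]
    rfl
  rw [hsub]
  refine hP _ ?_
  rw [modeFiber_cpTensor]
  exact U.sum_mem fun j _ => U.smul_mem _ (ha j)

theorem norm_cpTensor_sub_map_le (hδ : 0 ≤ δ)
    {U : (i : ι) → Submodule ℝ (EuclideanSpace ℝ (κ i))} (ha : ∀ j i, a j i ∈ U i)
    {P : (i : ι) → EuclideanSpace ℝ (κ i) →L[ℝ] EuclideanSpace ℝ (κ i)}
    (hP : ∀ i v, ‖P i v‖ ≤ ‖v‖) (hPU : ∀ i, ∀ v ∈ U i, ‖v - P i v‖ ≤ δ * ‖v‖) :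
    ‖cpTensor fun j i => P i (a j i)‖ ≤ ‖cpTensor a‖ ∧
      ‖cpTensor a - cpTensor fun j i => P i (a j i)‖ ≤ Fintype.card ι * δ * ‖cpTensor a‖ := by
  let a' (s : Finset ι) : ρ → (i : ι) → EuclideanSpace ℝ (κ i) :=
    fun j => s.piecewise (fun i => P i (a j i)) (a j)
  have htelescope (s : Finset ι) : ‖cpTensor (a' s)‖ ≤ ‖cpTensor a‖ ∧
      ‖cpTensor a - cpTensor (a' s)‖ ≤ s.card * δ * ‖cpTensor a‖ := by
    induction s using Finset.induction_on with
    | empty => simp [a']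
    | insert i s his ih =>
      have ha's (j : ρ) : a' s j i = a j i := s.piecewise_eq_of_notMem _ _ his
      have hstep : a' (insert i s) = fun j => Function.update (a' s j) i (P i (a' s j i)) := by
        funext j
        rw [ha's]
        exact s.piecewise_insert _ _ i
      rw [hstep]
      refine ⟨(norm_cpTensor_update_map_le i (hP i)).trans ih.1, ?_⟩
      have herr := norm_cpTensor_sub_update_map_le (fun j => ha's j ▸ ha j i) hδ (hPU i)
      rw [Finset.card_insert_of_notMem his]
      push_cast
      linarith [norm_sub_le_norm_sub_add_norm_sub (cpTensor a) (cpTensor (a' s))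
        (cpTensor fun j => Function.update (a' s j) i (P i (a' s j i))), ih.2,
        mul_le_mul_of_nonneg_left ih.1 hδ]
  simpa [a'] using htelescope Finset.univ

theorem exists_mem_cpTensorsIn_dist_le (hδ : 0 ≤ δ)
    {U U' : (i : ι) → Submodule ℝ (EuclideanSpace ℝ (κ i))} (hUU' : ∀ i, GapLE δ (U i) (U' i))
    {T : EuclideanSpace ℝ ((i : ι) → κ i)} (hT : T ∈ cpTensorsIn ρ U) :
    ∃ T' ∈ cpTensorsIn ρ U', ‖T'‖ ≤ ‖T‖ ∧ dist T T' ≤ Fintype.card ι * δ * ‖T‖ := by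
  obtain ⟨a, ha, rfl⟩ := hT
  obtain ⟨hnorm, hdist⟩ := norm_cpTensor_sub_map_le hδ ha
    (P := fun i => (U' i).starProjection) (fun i v => (U' i).norm_starProjection_apply_le v)
    (fun i v hv => (hUU' i).norm_sub_starProjection_le hv)
  exact ⟨_, ⟨_, fun j i => (U' i).starProjection_apply_mem _, rfl⟩, hnorm,
    (dist_eq_norm _ _).trans_le hdist⟩

end Tensors

section PolynomialMethod

open Polynomial in
/-- With `1 + y = exp θ`, the degree-`m` Chebyshev polynomial is large at `cosh θ` and bounded by
`1` on `[-1, 1]`; the substitution `X ↦ cosh θ - X / (2 * t ^ 2)` moves these to the origin and to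
`[ε ^ 2, 4 * t ^ 2]`. -/
theorem exists_abs_eval_le_one_of_mem_Icc {ε t : ℝ} (hε : 0 ≤ ε) (ht : 0 < t) (m : ℕ) :
    ∃ p : ℝ[X], p.natDegree ≤ m ∧ (1 + ε / t) ^ m / 2 ≤ p.eval 0 ∧
      ∀ s ∈ Set.Icc (ε ^ 2) (4 * t ^ 2), |p.eval s| ≤ 1 := by
  have hcosh : Real.cosh (Real.log (1 + ε / t)) ≤ 1 + (ε / t) ^ 2 / 2 := by
    rw [Real.cosh_log (by positivity)]
    field_simp
    nlinarith [mul_nonneg hε (sq_nonneg ε)]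
  set θ := Real.log (1 + ε / t)
  refine ⟨(Chebyshev.T ℝ m).comp (C (Real.cosh θ) - C (1 / (2 * t ^ 2)) * X), ?_, ?_, ?_⟩
  · have hlin : (C (Real.cosh θ) - C (1 / (2 * t ^ 2)) * X : ℝ[X]).natDegree ≤ 1 := by
      compute_degree
    calc _ ≤ _ * _ := natDegree_comp_le
      _ ≤ m * 1 := Nat.mul_le_mul (by simp [Chebyshev.natDegree_T]) hlin
      _ = m := mul_one m
  · have hexp : Real.exp (m * θ) = (1 + ε / t) ^ m := by
      rw [Real.exp_nat_mul, Real.exp_log (by positivity)]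
    simp only [eval_comp, eval_sub, eval_C, eval_mul, eval_X, mul_zero, sub_zero,
      Chebyshev.T_real_cosh, Int.cast_natCast]
    rw [Real.cosh_eq, hexp]
    linarith [Real.exp_pos (-(m * θ))]
  · rintro s ⟨hεs, hst⟩
    simp only [eval_comp, eval_sub, eval_C, eval_mul, eval_X]
    refine Chebyshev.abs_eval_T_real_le_one _ (abs_le.2 ⟨?_, ?_⟩)
    · have : 1 / (2 * t ^ 2) * s ≤ 2 := by
        rw [div_mul_eq_mul_div, one_mul, div_le_iff₀ (by positivity)]
        linarith
      linarith [Real.one_le_cosh θ]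
    · have : (ε / t) ^ 2 / 2 ≤ 1 / (2 * t ^ 2) * s := by
        rw [div_pow, div_div, div_mul_eq_mul_div, one_mul, mul_comm (t ^ 2)]
        gcongr
      linarith

theorem card_le_finrank_of_dominant_diagonal {I V : Type*} [Fintype I] [AddCommGroup V]
    [Module ℝ V] [FiniteDimensional ℝ V] {v : I → V} {φ : I → V →ₗ[ℝ] ℝ} {A : ℝ}
    (hA : Fintype.card I ≤ A) (hdiag : ∀ i, A ≤ φ i (v i))
    (hoff : ∀ i j, i ≠ j → |φ j (v i)| ≤ 1) : Fintype.card I ≤ finrank ℝ V := by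
  classical
  have hdet : (Matrix.of fun i j => φ j (v i)).det ≠ 0 := by
    refine det_ne_zero_of_sum_row_lt_diag fun i => ?_
    have hcard : ((Finset.univ.erase i).card : ℝ) < Fintype.card I := by
      exact_mod_cast Finset.card_lt_univ_of_notMem (Finset.notMem_erase i _)
    calc ∑ j ∈ Finset.univ.erase i, |φ j (v i)| ≤ (Finset.univ.erase i).card := by
          simpa using Finset.sum_le_card_nsmul (Finset.univ.erase i) (fun j => |φ j (v i)|) 1
            fun j hj => hoff i j (Finset.ne_of_mem_erase hj).symm
      _ < A := hcard.trans_le hA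
      _ ≤ |φ i (v i)| := (hdiag i).trans (le_abs_self _)
  have hrows := Matrix.linearIndependent_rows_of_det_ne_zero hdet
  exact (LinearIndependent.of_comp (LinearMap.pi φ) hrows).fintype_card_le_finrank

/-- The polynomial method: a degree-`m` polynomial in the squared distance that is large at `0` and
at most `1` at all other squared distances gives a diagonally dominant matrix. -/
theorem card_le_finrank_of_separated {X A : Type*} [PseudoMetricSpace X] [Ring A] [Algebra ℝ A]
    {s : Finset X} {ε t : ℝ} (hε : 0 ≤ ε) (ht : 0 < t)
    (hsep : (s : Set X).Pairwise (ε < dist · ·)) (hdiam : ∀ x ∈ s, ∀ y ∈ s, dist x y ≤ 2 * t)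
    {m : ℕ} (hm : s.card ≤ (1 + ε / t) ^ m / 2) {V : Submodule ℝ A} [FiniteDimensional ℝ V]
    {q : X → A} {ev : s → A →ₐ[ℝ] ℝ} (hev : ∀ x ∈ s, ∀ y, ev y (q x) = dist x y ^ 2)
    (hV : ∀ x ∈ s, ∀ p : Polynomial ℝ, p.natDegree ≤ m → p.aeval (q x) ∈ V) :
    s.card ≤ finrank ℝ V := by
  obtain ⟨p, hdeg, hp0, hp1⟩ := exists_abs_eval_le_one_of_mem_Icc hε ht m
  have heval (x y : s) : ev y (p.aeval (q x)) = p.eval (dist (x : X) y ^ 2) := by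
    rw [← Polynomial.aeval_algHom_apply, hev x x.2, Polynomial.coe_aeval_eq_eval]
  rw [← Fintype.card_coe]
  refine card_le_finrank_of_dominant_diagonal (v := fun x : s => ⟨_, hV x x.2 p hdeg⟩)
    (φ := fun y => (ev y).toLinearMap ∘ₗ V.subtype) (A := (1 + ε / t) ^ m / 2)
    (by simpa using hm) (fun x => ?_) fun x y hxy => ?_
  · simpa [heval] using hp0
  · have hlt := hsep x.2 y.2 (Subtype.coe_ne_coe.2 hxy)
    have hle := hdiam x x.2 y y.2
    simpa [heval] using hp1 _ ⟨by gcongr, by nlinarith [dist_nonneg (x := (x : X)) (y := y)]⟩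

theorem aeval_mem_pow_of_natDegree_le {R A : Type*} [CommSemiring R] [Semiring A] [Algebra R A]
    {W : Submodule R A} (hW : 1 ≤ W) {f : A} (hf : f ∈ W) {p : Polynomial R} {m : ℕ}
    (hp : p.natDegree ≤ m) : p.aeval f ∈ W ^ m := by
  rw [Polynomial.aeval_eq_sum_range]
  exact Submodule.sum_mem _ fun i hi => Submodule.smul_mem _ _ <|
    pow_le_pow_right₀ hW ((Finset.mem_range_succ_iff.1 hi).trans hp) (Submodule.pow_mem_pow W hf i)

theorem finite_restrictSupport (R : Type*) [CommSemiring R] {σ : Type*} {s : Set (σ →₀ ℕ)}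
    (hs : s.Finite) : Module.Finite R (MvPolynomial.restrictSupport R s) :=
  have := hs.to_subtype
  .of_basis (MvPolynomial.basisRestrictSupport R s)

theorem finrank_restrictSupport (R : Type*) [CommRing R] [Nontrivial R] {σ : Type*}
    (s : Set (σ →₀ ℕ)) : finrank R (MvPolynomial.restrictSupport R s) = s.ncard := by
  rw [finrank_eq_nat_card_basis (MvPolynomial.basisRestrictSupport R s), Nat.card_coe_set_eq]

end PolynomialMethod

section BalancedExponents

variable {ι ρ τ : Type*} [Fintype τ]

variable (ι ρ τ) in
/-- The exponents `e` in the coordinates `(i, j, l)`, for the `l`-th coordinate of the `i`-th factor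
of the `j`-th rank-one term, that are at most `D` and whose total degree in the `i`-th factor of the
`j`-th term does not depend on `i`. Monomials in the entries of a tensor of CP rank at most `|ρ|`
are combinations of monomials with such exponents. -/
def balancedExponents (D : ℕ) : Set (ι × ρ × τ →₀ ℕ) :=
  {e | (∀ v, e v ≤ D) ∧ ∀ i i' j, ∑ l, e (i, j, l) = ∑ l, e (i', j, l)}

theorem zero_mem_balancedExponents (D : ℕ) : 0 ∈ balancedExponents ι ρ τ D := by
  simp [balancedExponents]

theorem balancedExponents_add_subset (D D' : ℕ) :
    balancedExponents ι ρ τ D + balancedExponents ι ρ τ D' ⊆ balancedExponents ι ρ τ (D + D') := by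
  rintro _ ⟨e, ⟨heD, he⟩, e', ⟨heD', he'⟩, rfl⟩
  refine ⟨fun v => Nat.add_le_add (heD v) (heD' v), fun i i' j => ?_⟩
  simp only [Finsupp.add_apply, Finset.sum_add_distrib, he i i' j, he' i i' j]

theorem nsmul_balancedExponents_one_subset (D : ℕ) :
    D • balancedExponents ι ρ τ 1 ⊆ balancedExponents ι ρ τ D := by
  induction D with
  | zero => simpa using zero_mem_balancedExponents 0
  | succ D ih =>
    rw [succ_nsmul]
    exact (Set.add_subset_add_right ih).trans (balancedExponents_add_subset D 1)

theorem finite_balancedExponents [Finite ι] [Finite ρ] (D : ℕ) :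
    (balancedExponents ι ρ τ D).Finite := by
  classical
  exact (Set.finite_Icc 0 (Finsupp.equivFunOnFinite.symm fun _ => D)).subset
    fun _ he => ⟨zero_le, he.1⟩

theorem mapsTo_restrict_balancedExponents [DecidableEq ι] [DecidableEq ρ] [DecidableEq τ]
    (S : Finset (ι × ρ × τ)) (D : ℕ) :
    Set.MapsTo (fun e (v : S) => e v) (balancedExponents ι ρ τ D)
      (Fintype.piFinset fun _ : S => Finset.range (D + 1)) := fun e he => by
  simpa using fun i j l _ => Nat.lt_succ_of_le (he.1 (i, j, l))

variable [Fintype ι] [Fintype ρ]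

/-- The balance condition recovers the coordinates `(i, j, l₀)` with `i ≠ i₀` from the others. -/
theorem injOn_restrict_balancedExponents [DecidableEq ι] [DecidableEq ρ] [DecidableEq τ]
    (i₀ : ι) (l₀ : τ) (D : ℕ) :
    Set.InjOn (fun e (v : (({i₀}ᶜ ×ˢ Finset.univ ×ˢ {l₀})ᶜ : Finset (ι × ρ × τ))) => e v)
      (balancedExponents ι ρ τ D) := by
  rintro e ⟨-, he⟩ e' ⟨-, he'⟩ h
  have hoff (i : ι) (j : ρ) (l : τ) (hil : i = i₀ ∨ l ≠ l₀) : e (i, j, l) = e' (i, j, l) :=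
    congrFun h ⟨(i, j, l), by simpa [or_iff_not_imp_left, eq_comm] using hil⟩
  ext ⟨i, j, l⟩
  obtain rfl | hl := eq_or_ne l l₀
  · have hsum : ∑ l', e (i, j, l') = ∑ l', e' (i, j, l') := by
      rw [he i i₀ j, he' i i₀ j]
      exact Finset.sum_congr rfl fun l' _ => hoff i₀ j l' (.inl rfl)
    rw [← Finset.sum_erase_add _ _ (Finset.mem_univ l),
      ← Finset.sum_erase_add _ _ (Finset.mem_univ l),
      Finset.sum_congr rfl fun l' hl' => hoff i j l' (.inr (Finset.ne_of_mem_erase hl'))] at hsum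
    exact Nat.add_left_cancel hsum
  · exact hoff i j l (.inr hl)

theorem ncard_balancedExponents_le [Nonempty ι] [Nonempty τ] (D : ℕ) :
    (balancedExponents ι ρ τ D).ncard ≤ (D + 1) ^ (Fintype.card ι * (Fintype.card ρ *
      Fintype.card τ) - (Fintype.card ι - 1) * Fintype.card ρ) := by
  classical
  obtain ⟨i₀⟩ := ‹Nonempty ι›
  obtain ⟨l₀⟩ := ‹Nonempty τ›
  refine (Set.ncard_le_ncard_of_injOn _ (mapsTo_restrict_balancedExponents _ D)
    (injOn_restrict_balancedExponents i₀ l₀ D) (Finset.finite_toSet _)).trans_eq ?_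
  rw [Set.ncard_coe_finset, Fintype.card_piFinset]
  simp [Finset.card_compl]

end BalancedExponents

section DistancePolynomial

open MvPolynomial

variable {ι ρ τ : Type*} {κ : ι → Type*} [Fintype τ]

theorem one_le_restrictSupport_balancedExponents (D : ℕ) :
    1 ≤ restrictSupport ℝ (balancedExponents ι ρ τ D) := by
  rw [← restrictSupport_zero]
  exact restrictSupport_mono _ (by simpa using zero_mem_balancedExponents D)

variable [Fintype ι] [Fintype ρ]

theorem exists_cpTensor_eq_of_mem_cpTensorsIn {T : EuclideanSpace ℝ ((i : ι) → κ i)}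
    {U : (i : ι) → Submodule ℝ (EuclideanSpace ℝ (κ i))} (b : (i : ι) → Basis τ ℝ (U i))
    (hT : T ∈ cpTensorsIn ρ U) :
    ∃ c : ι × ρ × τ → ℝ,
      cpTensor (fun j i => ∑ l, c (i, j, l) • (b i l : EuclideanSpace ℝ (κ i))) = T := by
  obtain ⟨a, ha, rfl⟩ := hT
  refine ⟨fun v => (b v.1).repr ⟨a v.2.1 v.1, ha _ _⟩ v.2.2, ?_⟩
  congr! with j i
  simpa only [Submodule.coe_sum, Submodule.coe_smul] using
    congrArg Subtype.val ((b i).sum_repr ⟨a j i, ha j i⟩)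

variable (ρ) in
/-- The entry `∑ j, ∏ i, ∑ l, c (i, j, l) * β i l` of a sum of `ρ`-many rank-one tensors as a
polynomial in the coordinates `c` of the factors, where `β i l` is the relevant entry of the `l`-th
basis vector for the `i`-th factor. -/
noncomputable def cpEntryPolynomial (β : ι → τ → ℝ) : MvPolynomial (ι × ρ × τ) ℝ :=
  ∑ j, ∏ i, ∑ l, C (β i l) * X (i, j, l)

theorem cpEntryPolynomial_mem_restrictSupport (β : ι → τ → ℝ) :
    cpEntryPolynomial ρ β ∈ restrictSupport ℝ (balancedExponents ι ρ τ 1) := by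
  classical
  refine Submodule.sum_mem _ fun j _ => ?_
  rw [Finset.prod_univ_sum]
  refine Submodule.sum_mem _ fun g _ => ?_
  have hexp (i' : ι) (j' : ρ) (l : τ) :
      (∑ i, Finsupp.single (i, j, g i) 1 : ι × ρ × τ →₀ ℕ) (i', j', l) =
        if j = j' ∧ g i' = l then 1 else 0 := by
    rw [Finsupp.finsetSum_apply, Finset.sum_eq_single i' (fun i _ hi => by simp [hi]) (by simp)]
    simp [Finsupp.single_apply]
  simp_rw [C_mul_X_eq_monomial, ← monomial_sum_prod]
  refine (monomial_mem_restrictSupport ℝ).2 (.inl ⟨?_, fun i i' j' => ?_⟩)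
  · rintro ⟨i', j', l⟩
    rw [hexp]
    split_ifs <;> simp
  · simp [hexp, ite_and]

variable (ρ) in
/-- The squared distance to `S` of the tensor whose factors have given coordinates with respect to
the bases `b i`, as a polynomial in these coordinates. -/
noncomputable def distSqPolynomial [∀ i, Fintype (κ i)] [DecidableEq ι]
    (b : (i : ι) → τ → EuclideanSpace ℝ (κ i)) (S : EuclideanSpace ℝ ((i : ι) → κ i)) :
    MvPolynomial (ι × ρ × τ) ℝ :=
  ∑ k, (C (S k) - cpEntryPolynomial ρ fun i l => b i l (k i)) ^ 2

variable [∀ i, Fintype (κ i)] [DecidableEq ι]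

theorem distSqPolynomial_mem (b : (i : ι) → τ → EuclideanSpace ℝ (κ i))
    (S : EuclideanSpace ℝ ((i : ι) → κ i)) :
    distSqPolynomial ρ b S ∈ restrictSupport ℝ (balancedExponents ι ρ τ 1) ^ 2 := by
  refine Submodule.sum_mem _ fun k _ => Submodule.pow_mem_pow _ (Submodule.sub_mem _ ?_ ?_) 2
  · exact one_le_restrictSupport_balancedExponents 1 (Submodule.algebraMap_mem (S k))
  · exact cpEntryPolynomial_mem_restrictSupport _

theorem aeval_distSqPolynomial_mem (b : (i : ι) → τ → EuclideanSpace ℝ (κ i))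
    (S : EuclideanSpace ℝ ((i : ι) → κ i)) {p : Polynomial ℝ} {m : ℕ} (hp : p.natDegree ≤ m) :
    p.aeval (distSqPolynomial ρ b S) ∈ restrictSupport ℝ (balancedExponents ι ρ τ (2 * m)) := by
  have hW := one_le_restrictSupport_balancedExponents (ι := ι) (ρ := ρ) (τ := τ) 1
  have := aeval_mem_pow_of_natDegree_le (one_le_pow₀ hW) (distSqPolynomial_mem b S) hp
  rw [← pow_mul, ← restrictSupport_nsmul] at this
  exact restrictSupport_mono _ (nsmul_balancedExponents_one_subset _) this

theorem aeval_distSqPolynomial (b : (i : ι) → τ → EuclideanSpace ℝ (κ i))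
    (S : EuclideanSpace ℝ ((i : ι) → κ i)) (c : ι × ρ × τ → ℝ) :
    aeval c (distSqPolynomial ρ b S) =
      dist S (cpTensor fun j i => ∑ l, c (i, j, l) • b i l) ^ 2 := by
  simp [distSqPolynomial, cpEntryPolynomial, EuclideanSpace.dist_sq_eq, Real.dist_eq, cpTensor,
    mul_comm]

theorem card_le_of_separated_of_subset_cpTensorsIn [Nonempty ι] {r m : ℕ} [NeZero r] {ε t : ℝ}
    (hε : 0 ≤ ε) (ht : 0 < t) {U : (i : ι) → Submodule ℝ (EuclideanSpace ℝ (κ i))}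
    (hU : ∀ i, finrank ℝ (U i) = r) {s : Finset (EuclideanSpace ℝ ((i : ι) → κ i))}
    (hsU : ↑s ⊆ cpTensorsIn ρ U) (hst : ∀ T ∈ s, ‖T‖ ≤ t)
    (hsep : (s : Set (EuclideanSpace ℝ ((i : ι) → κ i))).Pairwise (ε < dist · ·))
    (hm : s.card ≤ (1 + ε / t) ^ m / 2) :
    s.card ≤ (2 * m + 1) ^ (Fintype.card ι * (Fintype.card ρ * r) -
      (Fintype.card ι - 1) * Fintype.card ρ) := by
  let b (i : ι) : Basis (Fin r) ℝ (U i) := finBasisOfFinrankEq ℝ (U i) (hU i)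
  choose c hc using fun T : s => exists_cpTensor_eq_of_mem_cpTensorsIn b (hsU T.2)
  have := finite_restrictSupport ℝ
    (finite_balancedExponents (ι := ι) (ρ := ρ) (τ := Fin r) (2 * m))
  calc s.card ≤ finrank ℝ (restrictSupport ℝ (balancedExponents ι ρ (Fin r) (2 * m))) :=
        card_le_finrank_of_separated hε ht hsep
          (fun T hT T' hT' => by linarith [dist_le_norm_add_norm T T', hst T hT, hst T' hT']) hm
          (q := distSqPolynomial ρ fun i l => (b i l : EuclideanSpace ℝ (κ i)))
          (ev := fun T => aeval (c T)) (fun T _ T' => by rw [aeval_distSqPolynomial, hc])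
          (fun T _ p hp => aeval_distSqPolynomial_mem _ T hp)
    _ ≤ _ := by
      rw [finrank_restrictSupport]
      simpa using ncard_balancedExponents_le (ι := ι) (ρ := ρ) (τ := Fin r) (2 * m)

end DistancePolynomial

section CoreNet

open Real

theorem log_le_mul_log_log_of_forall_le_pow {M x : ℝ} {K : ℕ} (hM : 1 ≤ M) (hx : 1 / 2 ≤ x)
    (h : ∀ m : ℕ, M ≤ (1 + 1 / x) ^ m / 2 → M ≤ (2 * m + 1) ^ K) :
    log M ≤ K * log (16 * x * log (2 * M)) := by
  have hℓ : 1 / 2 ≤ log (2 * M) := by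
    linarith [log_two_gt_d9, log_le_log two_pos (by linarith : 2 ≤ 2 * M)]
  set m := ⌈2 * x * log (2 * M)⌉₊
  have hm : m < 2 * x * log (2 * M) + 1 := Nat.ceil_lt_add_one (by positivity)
  have hlog : 1 / (2 * x) ≤ log (1 + 1 / x) := by
    refine le_trans ?_ (le_log_one_add_of_nonneg (by positivity))
    field_simp
    linarith
  have hMm : M ≤ (1 + 1 / x) ^ m / 2 := by
    rw [le_div_iff₀' two_pos, ← log_le_log_iff (by positivity) (by positivity), log_pow]
    calc log (2 * M) = 2 * x * log (2 * M) * (1 / (2 * x)) := by field_simp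
      _ ≤ m * log (1 + 1 / x) := by gcongr; exact Nat.le_ceil _
  rw [← log_pow]
  refine log_le_log (by positivity) ((h m hMm).trans ?_)
  gcongr
  nlinarith

/-- The double logarithm in `log_le_mul_log_log_of_forall_le_pow` is absorbed at the cost of
replacing the exponent `K` by `a * K / (a - 1)`. -/
theorem sub_one_mul_log_le_of_forall_le_pow {M x a : ℝ} {K : ℕ} (hM : 1 ≤ M) (hx : 1 / 2 ≤ x)
    (ha : 0 < a) (hK : 0 < K) (h : ∀ m : ℕ, M ≤ (1 + 1 / x) ^ m / 2 → M ≤ (2 * m + 1) ^ K) :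
    (a - 1) * log M ≤ a * K * log (16 * x * (a * K)) + 1 := by
  have hℓ : log (2 * M) ≤ 1 + log M := by
    rw [log_mul two_ne_zero (by positivity)]
    linarith [log_two_lt_d9]
  have hℓ0 : 0 < log (2 * M) := log_pos (by linarith)
  set ℓ := log (2 * M)
  have habsorb : log (16 * x * ℓ) ≤ log (16 * x * (a * K)) + ℓ / (a * K) := by
    have hsplit : 16 * x * ℓ = 16 * x * (a * K) * (ℓ / (a * K)) := by field_simp
    rw [hsplit, log_mul (by positivity) (by positivity)]
    gcongr
    exact log_le_self (by positivity)
  have hmain : a * log M ≤ a * K * log (16 * x * (a * K)) + ℓ := by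
    calc a * log M ≤ a * (K * log (16 * x * ℓ)) := by
          gcongr
          exact log_le_mul_log_log_of_forall_le_pow hM hx h
      _ ≤ a * (K * (log (16 * x * (a * K)) + ℓ / (a * K))) := by gcongr
      _ = a * K * log (16 * x * (a * K)) + ℓ := by field_simp
  linarith

/-- With `a = 2 * r`, the gap `(d - 1) * r` between the exponent in the hypothesis and `d * r ^ 2`
pays for the double logarithm. -/
theorem le_exp_one_mul_pow_of_forall_le_pow {M x : ℝ} {d r : ℕ} (hd : 2 ≤ d) (hr : 0 < r)
    (hM : 1 ≤ M) (hx : 1 / 2 ≤ x) (h : ∀ m : ℕ, M ≤ (1 + 1 / x) ^ m / 2 →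
      M ≤ (2 * m + 1) ^ (d * (r * r) - (d - 1) * r)) :
    M ≤ exp 1 * (32 * d * r ^ 3 * x) ^ (d * r ^ 2) := by
  have hd' : (2 : ℝ) ≤ d := by exact_mod_cast hd
  have hr' : (1 : ℝ) ≤ r := by exact_mod_cast hr
  obtain ⟨K, hK⟩ : ∃ K, K = d * (r * r) - (d - 1) * r := ⟨_, rfl⟩
  have hKr : (K : ℝ) = d * r ^ 2 - (d - 1) * r := by
    rw [hK, Nat.cast_sub (Nat.mul_le_mul (Nat.sub_le d 1) (Nat.le_mul_self r))]
    push_cast [Nat.cast_sub (one_le_two.trans hd)]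
    ring
  have hK0 : 0 < K := by
    have : (0 : ℝ) ≤ d * r * (r - 1) := mul_nonneg (by positivity) (sub_nonneg.2 hr')
    have : (0 : ℝ) < K := by rw [hKr]; linarith
    exact_mod_cast this
  have hKd : 2 * r * K ≤ (2 * r - 1) * (d * r ^ 2 : ℝ) := by rw [hKr]; nlinarith
  have hKd' : 2 * r * K ≤ (2 * d * r ^ 3 : ℝ) := by nlinarith
  have hQ : 1 ≤ 32 * d * r ^ 3 * x := by
    calc (1 : ℝ) ≤ 32 * 2 * 1 ^ 3 * (1 / 2) := by norm_num
      _ ≤ _ := by gcongr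
  have hlog : (2 * r - 1) * log M ≤
      (2 * r - 1) * (d * r ^ 2 * log (32 * d * r ^ 3 * x) + 1) := by
    calc (2 * r - 1) * log M ≤ 2 * r * K * log (16 * x * (2 * r * K)) + 1 :=
          sub_one_mul_log_le_of_forall_le_pow hM hx (by positivity) hK0 (hK ▸ h)
      _ ≤ 2 * r * K * log (32 * d * r ^ 3 * x) + 1 := by
          gcongr 2 * r * K * log ?_ + 1
          nlinarith
      _ ≤ (2 * r - 1) * (d * r ^ 2) * log (32 * d * r ^ 3 * x) + (2 * r - 1) := by
          gcongr
          · exact log_nonneg hQ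
          · linarith
      _ = _ := by ring
  rw [← log_le_log_iff (by positivity) (by positivity), log_mul (by positivity) (by positivity),
    log_exp, log_pow, add_comm]
  push_cast
  exact le_of_mul_le_mul_left hlog (by linarith)

theorem hasNet_cpTensorsIn {ι ρ : Type*} {κ : ι → Type*} [Fintype ι] [Fintype ρ] [Nonempty ρ]
    [DecidableEq ι] [∀ i, Fintype (κ i)] (hι : 2 ≤ Fintype.card ι) {ε t : ℝ} (hε : 0 < ε)
    (hεt : ε ≤ 2 * t) {U : (i : ι) → Submodule ℝ (EuclideanSpace ℝ (κ i))}
    (hU : ∀ i, finrank ℝ (U i) = Fintype.card ρ) :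
    HasNet {T ∈ cpTensorsIn ρ U | ‖T‖ ≤ t} ε (exp 1 * (32 * Fintype.card ι *
      Fintype.card ρ ^ 3 * (t / ε)) ^ (Fintype.card ι * Fintype.card ρ ^ 2)) := by
  have : Nonempty ι := Fintype.card_pos_iff.1 (two_pos.trans_le hι)
  have ht : 0 < t := by linarith
  refine hasNet_of_separated_card_le hε.le fun s hs hsep => ?_
  obtain rfl | hs0 := s.eq_empty_or_nonempty
  · simp only [Finset.card_empty, Nat.cast_zero]
    positivity
  refine le_exp_one_mul_pow_of_forall_le_pow hι Fintype.card_pos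
    (by exact_mod_cast hs0.card_pos) (by rw [div_le_div_iff₀ two_pos hε]; linarith)
    fun m hm => ?_
  rw [one_div_div] at hm
  exact_mod_cast card_le_of_separated_of_subset_cpTensorsIn hε.le ht hU (fun T hT => (hs hT).1)
    (fun T hT => (hs hT).2) hsep hm

end CoreNet

section Covering

open Real

variable {d r : ℕ} {n : Fin d → ℕ} {ε t : ℝ}

theorem CPRankLE.exists_mem_piFinset_dist_le {δ : ℝ} (hδ : 0 ≤ δ) (hrn : ∀ i, r ≤ n i)
    {G : (i : Fin d) → Finset (Submodule ℝ (EuclideanSpace ℝ (Fin (n i))))}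
    (hG : ∀ i, ∀ U : Submodule ℝ (EuclideanSpace ℝ (Fin (n i))), finrank ℝ U = r →
      ∃ U' ∈ G i, GapLE δ U U')
    {T : EuclideanSpace ℝ ((i : Fin d) → Fin (n i))} (hT : CPRankLE r T) :
    ∃ U ∈ Fintype.piFinset G, ∃ T' ∈ cpTensorsIn (Fin r) U,
      ‖T'‖ ≤ ‖T‖ ∧ dist T T' ≤ d * δ * ‖T‖ := by
  obtain ⟨U, hUr, hTU⟩ := hT.exists_mem_cpTensorsIn hrn
  choose U' hU' hUU' using fun i => hG i (U i) (hUr i)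
  obtain ⟨T', hT', hnorm, hdist⟩ := exists_mem_cpTensorsIn_dist_le hδ hUU' hTU
  exact ⟨U', Fintype.mem_piFinset.2 hU', T', hT', hnorm, by simpa using hdist⟩

/-- Each tensor lies in a product of `r`-dimensional subspaces; moving these to the nets of the
Grassmannians costs `ε / 2`, and so does the net of the tensors in a fixed product. -/
theorem hasNet_cpRankLE_of_grassmann (hd : 2 ≤ d) (hr : 0 < r) (hrn : ∀ i, r ≤ n i) (hε : 0 < ε)
    (hεt : ε ≤ 2 * t) :
    HasNet {T : EuclideanSpace ℝ ((i : Fin d) → Fin (n i)) | CPRankLE r T ∧ ‖T‖ ≤ t} ε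
      ((∏ i, 5 ^ (r * n i) * (1 + 4 * d * (t / ε)) ^ (r * (n i - r))) *
        (exp 1 * (64 * d * r ^ 3 * (t / ε)) ^ (d * r ^ 2))) := by
  have : NeZero r := ⟨hr.ne'⟩
  have ht : 0 < t := by linarith
  have hδ : 0 < ε / (2 * d * t) := by positivity
  choose G hGr hGcard hG using fun i =>
    exists_finset_gapLE (H := EuclideanSpace ℝ (Fin (n i))) r hδ
  have hnet : ∀ U ∈ Fintype.piFinset G, HasNet {T ∈ cpTensorsIn (Fin r) U | ‖T‖ ≤ t} (ε / 2)
      (exp 1 * (64 * d * r ^ 3 * (t / ε)) ^ (d * r ^ 2)) := fun U hU => by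
    have hUr (i : Fin d) : finrank ℝ (U i) = Fintype.card (Fin r) := by
      simpa using hGr i _ (Fintype.mem_piFinset.1 hU i)
    refine (hasNet_cpTensorsIn (by simpa using hd) (half_pos hε) (by linarith) hUr).mono
      (le_of_eq ?_)
    simp only [Fintype.card_fin]
    ring
  have hsub : ∀ U ∈ Fintype.piFinset G, {T ∈ cpTensorsIn (Fin r) U | ‖T‖ ≤ t} ⊆
      {T | CPRankLE r T ∧ ‖T‖ ≤ t} :=
    fun U _ T hT => ⟨cpRankLE_of_mem_cpTensorsIn hT.1, hT.2⟩
  have hcover : ∀ T ∈ {T | CPRankLE r T ∧ ‖T‖ ≤ t}, ∃ U ∈ Fintype.piFinset G,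
      ∃ T' ∈ {T ∈ cpTensorsIn (Fin r) U | ‖T‖ ≤ t}, dist T T' ≤ ε / 2 := by
    rintro T ⟨hTr, hTt⟩
    obtain ⟨U, hU, T', hT', hnorm, hdist⟩ := hTr.exists_mem_piFinset_dist_le hδ.le hrn hG
    refine ⟨U, hU, T', ⟨hT', hnorm.trans hTt⟩, ?_⟩
    calc dist T T' ≤ d * (ε / (2 * d * t)) * ‖T‖ := hdist
      _ ≤ d * (ε / (2 * d * t)) * t := by gcongr
      _ = ε / 2 := by field_simp
  have hcard : ((Fintype.piFinset G).card : ℝ) ≤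
      ∏ i, 5 ^ (r * n i) * (1 + 4 * d * (t / ε)) ^ (r * (n i - r)) := by
    rw [Fintype.card_piFinset, Nat.cast_prod]
    gcongr with i
    refine (hGcard i).trans_eq ?_
    rw [finrank_euclideanSpace_fin, div_div_eq_mul_div]
    congr 3
    ring
  have hfinal := (HasNet.of_biUnion hsub hnet hcover).mono
    (mul_le_mul_of_nonneg_right hcard (by positivity))
  rwa [add_halves] at hfinal

theorem prod_five_pow_mul_core_le {x : ℝ} (hd : 2 ≤ d) (hr : 0 < r) (hrn : ∀ i, r ≤ n i)
    (hx : 1 / 2 ≤ x) :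
    (∏ i, 5 ^ (r * n i) * (1 + 4 * d * x) ^ (r * (n i - r))) *
        (exp 1 * (64 * d * r ^ 3 * x) ^ (d * r ^ 2)) ≤
      (30 * d * x) ^ (r * ∑ i, n i) * (30 * r ^ 3) ^ (d * r ^ 2) := by
  have hdx : 1 + 4 * d * x ≤ 6 * d * x := by
    have : (2 : ℝ) ≤ d := by exact_mod_cast hd
    nlinarith
  have hcore : exp 1 * (64 * d * r ^ 3 * x) ^ (d * r ^ 2) ≤
      (6 * d * x * (30 * r ^ 3)) ^ (d * r ^ 2) := by
    calc exp 1 * (64 * d * r ^ 3 * x) ^ (d * r ^ 2)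
        ≤ exp 1 ^ (d * r ^ 2) * (64 * d * r ^ 3 * x) ^ (d * r ^ 2) := by
          gcongr
          exact le_self_pow₀ (one_le_exp zero_le_one) (by positivity)
      _ = (exp 1 * (64 * d * r ^ 3 * x)) ^ (d * r ^ 2) := (mul_pow _ _ _).symm
      _ ≤ (2.8 * (64 * d * r ^ 3 * x)) ^ (d * r ^ 2) := by
          gcongr
          linarith [exp_one_lt_d9]
      _ ≤ (6 * d * x * (30 * r ^ 3)) ^ (d * r ^ 2) := by
          gcongr ?_ ^ _
          nlinarith [show 0 ≤ d * r ^ 3 * x by positivity]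
  have hmode (i : Fin d) : 5 ^ (r * n i) * (6 * d * x) ^ (r * (n i - r)) * (6 * d * x) ^ (r ^ 2) =
      (30 * d * x) ^ (r * n i) := by
    rw [mul_assoc, ← pow_add, sq, ← mul_add, Nat.sub_add_cancel (hrn i), ← mul_pow]
    ring
  calc _ ≤ (∏ i, 5 ^ (r * n i) * (6 * d * x) ^ (r * (n i - r))) *
        (6 * d * x * (30 * r ^ 3)) ^ (d * r ^ 2) := by gcongr
    _ = (∏ i, 5 ^ (r * n i) * (6 * d * x) ^ (r * (n i - r)) * (6 * d * x) ^ (r ^ 2)) *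
        (30 * r ^ 3) ^ (d * r ^ 2) := by
      rw [Finset.prod_mul_distrib (g := fun _ => (6 * d * x) ^ (r ^ 2)), Finset.prod_const,
        Finset.card_fin, ← pow_mul, mul_comm (r ^ 2) d, mul_pow (6 * d * x), ← mul_assoc]
    _ = _ := by
      simp_rw [hmode]
      rw [Finset.prod_pow_eq_pow_sum, ← Finset.mul_sum]

theorem hasNet_cpRankLE (hd : 0 < d) (hr : 0 < r) (hrn : ∀ i, r ≤ n i) (hε : 0 < ε)
    (hεt : ε ≤ 2 * t) :
    HasNet {T : EuclideanSpace ℝ ((i : Fin d) → Fin (n i)) | CPRankLE r T ∧ ‖T‖ ≤ t} ε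
      ((30 * d * (t / ε)) ^ (r * ∑ i, n i) * (30 * r ^ 3) ^ (d * r ^ 2)) := by
  have hx : 1 / 2 ≤ t / ε := by
    rw [div_le_div_iff₀ two_pos hε]
    linarith
  obtain rfl | hd := eq_or_lt_of_le (show 1 ≤ d from hd)
  · refine (hasNet_of_norm_le (by linarith) hε fun T hT => hT.2).mono ?_
    have hone_le_core : (1 : ℝ) ≤ 30 * r ^ 3 := by
      have : (1 : ℝ) ≤ r := by exact_mod_cast hr
      linarith [one_le_pow₀ this (n := 3)]
    rw [finrank_euclideanSpace, Fintype.card_pi, mul_div_assoc]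
    simp only [Fintype.card_fin, Finset.univ_unique, Finset.prod_singleton, Finset.sum_singleton]
    have hbase : 1 + 2 * (t / ε) ≤ 30 * (1 : ℕ) * (t / ε) := by
      push_cast
      linarith
    have hone_le_base : 1 ≤ 30 * (1 : ℕ) * (t / ε) := by
      push_cast
      linarith
    calc (1 + 2 * (t / ε)) ^ n default ≤ (30 * (1 : ℕ) * (t / ε)) ^ n default :=
          pow_le_pow_left₀ (by linarith) hbase _
      _ ≤ (30 * (1 : ℕ) * (t / ε)) ^ (r * n default) :=
          pow_le_pow_right₀ hone_le_base (Nat.le_mul_of_pos_left _ hr)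
      _ ≤ _ := le_mul_of_one_le_right (by positivity) (one_le_pow₀ hone_le_core)
  · exact (hasNet_cpRankLE_of_grassmann hd hr hrn hε hεt).mono
      (prod_five_pow_mul_core_le hd hr hrn hx)

theorem four_mul_log_thirty_le (hr : 0 < r) (hn : ∀ i, 2 ≤ n i) (hrn : ∀ i, r ≤ n i) :
    4 * (d * r ^ 2) * log 30 ≤ 2 * (r * ∑ i, (n i : ℝ)) * log 30 + 10 * (d * r ^ 2) * log r := by
  have hsum {k : ℕ} (hk : ∀ i, k ≤ n i) : (d * k : ℝ) ≤ ∑ i, (n i : ℝ) := by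
    simpa using Finset.card_nsmul_le_sum Finset.univ (fun i => (n i : ℝ)) k
      fun i _ => by exact_mod_cast hk i
  have hlog30 : 0 ≤ log 30 := log_nonneg (by norm_num)
  obtain rfl | hr2 := eq_or_lt_of_le (show 1 ≤ r from hr)
  · have := mul_le_mul_of_nonneg_right (hsum hn) hlog30
    push_cast at this ⊢
    rw [log_one]
    linarith
  · have hlogr : log 30 ≤ 5 * log r := by
      have : (30 : ℝ) ≤ r ^ 5 := by
        calc (30 : ℝ) ≤ 2 ^ 5 := by norm_num
          _ ≤ r ^ 5 := by gcongr; exact_mod_cast hr2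
      simpa using log_le_log (by norm_num) this
    calc 4 * (d * r ^ 2) * log 30 = 2 * (r * (d * r)) * log 30 + 2 * (d * r ^ 2) * log 30 := by ring
      _ ≤ 2 * (r * ∑ i, (n i : ℝ)) * log 30 + 2 * (d * r ^ 2) * (5 * log r) := by
          gcongr
          exact hsum hrn
      _ = _ := by ring

theorem log_covering_bound_le {x : ℝ} (hd : 0 < d) (hr : 0 < r) (hn : ∀ i, 2 ≤ n i)
    (hrn : ∀ i, r ≤ n i) (hx : 0 < x) :
    log ((30 * d * x) ^ (r * ∑ i, n i) * (30 * r ^ 3) ^ (d * r ^ 2)) ≤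
      r * (∑ i, (n i : ℝ)) * log (30 ^ 3 * d * x) + 13 * d ^ 2 * r ^ 2 * log r -
        d * r ^ 2 * log (30 ^ 3) := by
  have hdd : (d : ℝ) ≤ d ^ 2 := by exact_mod_cast Nat.le_self_pow two_ne_zero d
  have hdlog : 13 * d * r ^ 2 * log r ≤ 13 * d ^ 2 * r ^ 2 * log r := by
    gcongr
  have hconst : log (30 ^ 3 * d * x) = 2 * log 30 + log (30 * d * x) := by
    calc log (30 ^ 3 * d * x) = log (30 ^ 2 * (30 * d * x)) := by ring_nf
      _ = 2 * log 30 + log (30 * d * x) := by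
        rw [log_mul (by positivity) (by positivity), log_pow, Nat.cast_ofNat]
  have hcore : log (30 * r ^ 3) = log 30 + 3 * log r := by
    rw [log_mul (by positivity) (by positivity), log_pow, Nat.cast_ofNat]
  rw [log_mul (by positivity) (by positivity), log_pow, log_pow, hconst, hcore, log_pow]
  push_cast
  linarith [four_mul_log_thirty_le hr hn hrn]

end Covering

/-- Covering number bound for tensors of small CP rank (`r ≤ minᵢ nᵢ`) and Frobenius
norm at most `t`: there is an `ε`-net `F` with
`log |F| ≤ r(Σᵢ nᵢ)·log(c₁dt/ε) + c₂d²r²·log r − dr²·log c₁`. -/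
theorem covering_low_cp_rank_small_rank : ∃ c₁ c₂ : ℝ, 1 ≤ c₁ ∧ 1 ≤ c₂ ∧
    ∀ (d : ℕ), 1 ≤ d → ∀ (n : Fin d → ℕ), (∀ i, 2 ≤ n i) →
    ∀ (r : ℕ), 1 ≤ r → (∀ i, r ≤ n i) → ∀ (t ε : ℝ), 0 < t → 0 < ε → ε ≤ 2 * t →
    ∃ F : Finset (EuclideanSpace ℝ ((i : Fin d) → Fin (n i))),
      (↑F ⊆ {T : EuclideanSpace ℝ ((i : Fin d) → Fin (n i)) | CPRankLE r T ∧ ‖T‖ ≤ t}) ∧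
      Real.log F.card
        ≤ r * (∑ i, (n i : ℝ)) * Real.log (c₁ * d * t / ε)
          + c₂ * d ^ 2 * r ^ 2 * Real.log r - d * r ^ 2 * Real.log c₁ ∧
      ∀ T : EuclideanSpace ℝ ((i : Fin d) → Fin (n i)),
        CPRankLE r T → ‖T‖ ≤ t → ∃ y ∈ F, dist T y ≤ ε := by
  refine ⟨30 ^ 3, 13, by norm_num, by norm_num, fun d hd n hn r hr hrn t ε ht hε hεt => ?_⟩
  obtain ⟨F, hFsub, hFcard, hF⟩ := hasNet_cpRankLE hd hr hrn hε hεt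
  refine ⟨F, hFsub, ?_, fun T hTr hTt => hF T ⟨hTr, hTt⟩⟩
  obtain ⟨T, hT, -⟩ := hF 0 ⟨⟨0, by simp [Nat.one_le_iff_ne_zero.1 hd]⟩, by simpa using ht.le⟩
  calc Real.log F.card ≤ _ := Real.log_le_log (by exact_mod_cast Finset.card_pos.2 ⟨T, hT⟩) hFcard
    _ ≤ _ := log_covering_bound_le hd hr hn hrn (div_pos ht hε)
    _ = _ := by rw [← mul_div_assoc]
end

section
/- For all real numbers a, b, c with 0 < a ≤ b ≤ c, the inequality ∫_a^b √(log(c/ε)) dε ≤ b·√π + b·√(log(c/b)) − a·√(log(c/a)) holds. -/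
/-!
Let `s x = √(log (c / x))`, so that `c * exp (-s x ^ 2) = x`. Integrating by parts and substituting
`t = s x` in the remaining integral gives the exact identity
`∫ x in a..b, s x = b * s b - a * s a + c * ∫ t in s b..s a, exp (-t ^ 2)`.
The Gaussian tail from `u ≥ 0` is at most `exp (-u ^ 2)` times the full half-line integral `√π / 2`,
and at `u = s b` the factor `c * exp (-u ^ 2)` is exactly `b`.
-/

open MeasureTheory Real Set

section GaussianTail

variable {k u : ℝ}

theorem integral_gaussian_Ioi_le (hk : 0 < k) (hu : 0 ≤ u) :
    ∫ t in Ioi u, exp (-k * t ^ 2) ≤ exp (-k * u ^ 2) * (√(π / k) / 2) := by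
  have hint := integrable_exp_neg_mul_sq hk
  have htranslate :
      ∫ t in Ioi u, exp (-k * t ^ 2) = ∫ t in Ioi 0, exp (-k * (t + u) ^ 2) := by
    simpa only [preimage_add_const_Ioi, sub_self] using
      ((measurePreserving_add_right volume u).setIntegral_preimage_emb
        (measurableEmbedding_addRight u) (fun t ↦ exp (-k * t ^ 2)) (Ioi u)).symm
  have hfactor : ∀ t ∈ Ioi (0 : ℝ),
      exp (-k * (t + u) ^ 2) ≤ exp (-k * u ^ 2) * exp (-k * t ^ 2) := by
    intro t ht
    have hcross : 0 ≤ k * (t * u) := mul_nonneg hk.le (mul_nonneg (le_of_lt ht) hu)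
    rw [← exp_add, exp_le_exp]
    linarith
  calc ∫ t in Ioi u, exp (-k * t ^ 2)
      = ∫ t in Ioi 0, exp (-k * (t + u) ^ 2) := htranslate
    _ ≤ ∫ t in Ioi 0, exp (-k * u ^ 2) * exp (-k * t ^ 2) :=
        setIntegral_mono_on (hint.comp_add_right u).integrableOn
          (hint.const_mul _).integrableOn measurableSet_Ioi hfactor
    _ = exp (-k * u ^ 2) * (√(π / k) / 2) := by
        rw [integral_const_mul, integral_gaussian_Ioi]

theorem intervalIntegral_gaussian_le (hk : 0 < k) (hu : 0 ≤ u) (v : ℝ) :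
    ∫ t in u..v, exp (-k * t ^ 2) ≤ exp (-k * u ^ 2) * (√(π / k) / 2) := by
  have hint := integrable_exp_neg_mul_sq hk
  calc ∫ t in u..v, exp (-k * t ^ 2)
      = (∫ t in Ioi u, exp (-k * t ^ 2)) - ∫ t in Ioi v, exp (-k * t ^ 2) :=
        (intervalIntegral.integral_Ioi_sub_Ioi' hint.integrableOn hint.integrableOn).symm
    _ ≤ ∫ t in Ioi u, exp (-k * t ^ 2) :=
        sub_le_self _ (integral_nonneg fun _ ↦ (exp_pos _).le)
    _ ≤ exp (-k * u ^ 2) * (√(π / k) / 2) := integral_gaussian_Ioi_le hk hu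

end GaussianTail

section SqrtLogDiv

variable {a b c x : ℝ}

theorem mul_exp_neg_sq_sqrt_log_div (hx : 0 < x) (hxc : x ≤ c) :
    c * exp (-√(log (c / x)) ^ 2) = x := by
  have hc : 0 < c := hx.trans_le hxc
  rw [sq_sqrt (log_nonneg ((one_le_div hx).2 hxc)), ← log_inv, inv_div,
    exp_log (div_pos hx hc), mul_div_cancel₀ _ hc.ne']

theorem continuousOn_sqrt_log_div (hc : c ≠ 0) :
    ContinuousOn (fun x ↦ √(log (c / x))) {0}ᶜ :=
  ((continuousOn_const.div continuousOn_id fun _ hx ↦ hx).log fun _ hx ↦ div_ne_zero hc hx).sqrt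

theorem hasDerivAt_sqrt_log_div (hx : 0 < x) (hxc : x < c) :
    HasDerivAt (fun y ↦ √(log (c / y))) (-(1 / (2 * x * √(log (c / x))))) x := by
  have hc : 0 < c := hx.trans hxc
  have hlog : 0 < log (c / x) := log_pos ((one_lt_div hx).2 hxc)
  convert! ((((hasDerivAt_const x c).div (hasDerivAt_id x) hx.ne').log
    (div_pos hc hx).ne').sqrt hlog.ne') using 1
  simp only [id_eq, Pi.div_apply]
  field_simp
  ring

theorem hasDerivAt_integral_exp_neg_sq (s : ℝ) :
    HasDerivAt (fun s ↦ ∫ t in 0..s, exp (-t ^ 2)) (exp (-s ^ 2)) s :=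
  ((by fun_prop : Continuous fun t : ℝ ↦ exp (-t ^ 2)).integral_hasStrictDerivAt 0 s).hasDerivAt

theorem hasDerivAt_primitive_sqrt_log_div (hx : 0 < x) (hxc : x < c) :
    HasDerivAt (fun y ↦ y * √(log (c / y)) - c * ∫ t in 0..√(log (c / y)), exp (-t ^ 2))
      (√(log (c / x))) x := by
  have hs := hasDerivAt_sqrt_log_div hx hxc
  convert! ((hasDerivAt_id x).mul hs).sub
    (((hasDerivAt_integral_exp_neg_sq _).comp x hs).const_mul c) using 1
  rw [← mul_assoc, mul_exp_neg_sq_sqrt_log_div hx hxc.le, id_eq]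
  ring

theorem integral_sqrt_log_div_eq (ha : 0 < a) (hab : a ≤ b) (hbc : b ≤ c) :
    ∫ x in a..b, √(log (c / x))
      = b * √(log (c / b)) - a * √(log (c / a))
        + c * ∫ t in √(log (c / b))..√(log (c / a)), exp (-t ^ 2) := by
  have hcont : ContinuousOn (fun x ↦ √(log (c / x))) (Icc a b) :=
    (continuousOn_sqrt_log_div (ha.trans_le (hab.trans hbc)).ne').mono
      fun x hx ↦ (ha.trans_le hx.1).ne'
  have herf : Continuous fun s ↦ ∫ t in 0..s, exp (-t ^ 2) :=
    continuous_iff_continuousAt.2 fun s ↦ (hasDerivAt_integral_exp_neg_sq s).continuousAt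
  have hprimitive : ContinuousOn
      (fun x ↦ x * √(log (c / x)) - c * ∫ t in 0..√(log (c / x)), exp (-t ^ 2)) (Icc a b) :=
    (continuousOn_id.mul hcont).sub (continuousOn_const.mul (herf.comp_continuousOn hcont))
  have hgauss (u v : ℝ) : IntervalIntegrable (fun t ↦ exp (-t ^ 2)) volume u v :=
    Continuous.intervalIntegrable (by fun_prop) u v
  have hsplit : ∫ t in √(log (c / b))..√(log (c / a)), exp (-t ^ 2)
      = (∫ t in 0..√(log (c / a)), exp (-t ^ 2)) - ∫ t in 0..√(log (c / b)), exp (-t ^ 2) :=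
    (intervalIntegral.integral_interval_sub_left (hgauss 0 _) (hgauss 0 _)).symm
  rw [intervalIntegral.integral_eq_sub_of_hasDerivAt_of_le hab hprimitive
    (fun x hx ↦ hasDerivAt_primitive_sqrt_log_div (ha.trans hx.1) (hx.2.trans_le hbc))
    (hcont.intervalIntegrable_of_Icc hab), hsplit]
  ring

end SqrtLogDiv

theorem integral_sqrt_log_le_general {a b c : ℝ} (ha : 0 < a) (hab : a ≤ b) (hbc : b ≤ c) :
    ∫ x in a..b, √(log (c / x))
      ≤ b * (√π / 2) + (b * √(log (c / b)) - a * √(log (c / a))) := by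
  have hb : 0 < b := ha.trans_le hab
  have htail : ∫ t in √(log (c / b))..√(log (c / a)), exp (-t ^ 2)
      ≤ exp (-√(log (c / b)) ^ 2) * (√π / 2) := by
    simpa using intervalIntegral_gaussian_le one_pos (sqrt_nonneg _) √(log (c / a))
  have hremainder : c * ∫ t in √(log (c / b))..√(log (c / a)), exp (-t ^ 2) ≤ b * (√π / 2) :=
    calc c * ∫ t in √(log (c / b))..√(log (c / a)), exp (-t ^ 2)
        ≤ c * (exp (-√(log (c / b)) ^ 2) * (√π / 2)) :=
          mul_le_mul_of_nonneg_left htail (hb.le.trans hbc)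
      _ = b * (√π / 2) := by rw [← mul_assoc, mul_exp_neg_sq_sqrt_log_div hb hbc]
  rw [integral_sqrt_log_div_eq ha hab hbc]
  linarith

/-- Bound on the Dudley-type integral `∫_a^b √(log(c/ε)) dε`:
it is at most `b·√π + b·√(log(c/b)) − a·√(log(c/a))`. -/
theorem integral_sqrt_log_le (a b c : ℝ) (ha : 0 < a) (hab : a ≤ b) (hbc : b ≤ c) :
    ∫ x in a..b, Real.sqrt (Real.log (c / x))
      ≤ b * Real.sqrt Real.pi
        + (b * Real.sqrt (Real.log (c / b)) - a * Real.sqrt (Real.log (c / a))) := by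
  have hhalf : b * (√π / 2) ≤ b * √π :=
    mul_le_mul_of_nonneg_left (half_le_self (sqrt_nonneg π)) (ha.trans_le hab).le
  linarith [integral_sqrt_log_le_general ha hab hbc]
end

section
/- For every t > 0 and every ε with 0 < ε < t, there exist a natural number Δ with Δ ≤ (6/π²)·(log(4t/ε))² and real polynomials P, Q in one variable with deg P ≤ 1 + Δ and deg Q ≤ Δ, such that Q(x) ≠ 0 for every x ∈ [−t, t], and for every x ∈ [−t, t] one has |P(x)/Q(x) − max(x, 0)| ≤ ε and |P(x)/Q(x)| ≤ t. -/
/-!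
Newman's method. For `p` with negative real roots, `p (-x) / p x` is small in absolute value for
`x > 0` and large for `x < 0`, so `x * p x ^ 2 / (p x ^ 2 + p (-x) ^ 2)` is close to `max x 0`.
For `|x| ≤ 2 * ε` the trivial bound `|p (-|x|)| ≤ p |x|` already gives the error `ε`. To cover
`[2 * ε, t]` the roots are equally spaced in logarithmic scale: at `x = exp v`, a root `-exp c`
contributes to `|p (-x) / p x|` the factor `|tanh ((c - v) / 2)| ≤ exp (-2 * exp (-|c - v|))`, and
the sum of `exp (-|c - v|)` over all roots is a Riemann sum of an explicit integral.
-/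

section

open Real Finset Polynomial

/-- The numerator `x p(x)²` of the rational approximation to ReLU attached to `p`. -/
noncomputable def reluNum (p : ℝ[X]) : ℝ[X] := X * p ^ 2

/-- The denominator `p(x)² + p(-x)²` of the rational approximation to ReLU attached to `p`. -/
noncomputable def reluDen (p : ℝ[X]) : ℝ[X] := p ^ 2 + p.comp (-X) ^ 2

lemma natDegree_reluNum_le (p : ℝ[X]) : (reluNum p).natDegree ≤ 1 + 2 * p.natDegree :=
  natDegree_mul_le.trans (add_le_add natDegree_X_le natDegree_pow_le)

lemma natDegree_reluDen_le (p : ℝ[X]) : (reluDen p).natDegree ≤ 2 * p.natDegree := by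
  have hcomp : (p.comp (-X)).natDegree = p.natDegree := by
    rw [natDegree_comp, natDegree_neg, natDegree_X, mul_one]
  refine (natDegree_add_le _ _).trans (max_le natDegree_pow_le ?_)
  exact hcomp ▸ natDegree_pow_le

@[simp]
lemma eval_reluNum (p : ℝ[X]) (x : ℝ) : (reluNum p).eval x = x * p.eval x ^ 2 := by
  simp [reluNum]

@[simp]
lemma eval_reluDen (p : ℝ[X]) (x : ℝ) :
    (reluDen p).eval x = p.eval x ^ 2 + p.eval (-x) ^ 2 := by
  simp [reluDen]

lemma eval_reluDen_abs (p : ℝ[X]) (x : ℝ) : (reluDen p).eval |x| = (reluDen p).eval x := by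
  rcases abs_choice x with h | h <;> simp [h, add_comm]

lemma eval_reluDen_pos {p : ℝ[X]} {x : ℝ} (hp : p.eval |x| ≠ 0) : 0 < (reluDen p).eval x := by
  rw [← eval_reluDen_abs, eval_reluDen]
  positivity

lemma abs_reluNum_div_reluDen_le (p : ℝ[X]) (x : ℝ) :
    |(reluNum p).eval x / (reluDen p).eval x| ≤ |x| := by
  have hweight : |p.eval x ^ 2 / (p.eval x ^ 2 + p.eval (-x) ^ 2)| ≤ 1 := by
    rw [abs_of_nonneg (by positivity)]
    exact div_le_one_of_le₀ (le_add_of_nonneg_right (sq_nonneg _)) (by positivity)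
  rw [eval_reluNum, eval_reluDen, mul_div_assoc, abs_mul]
  exact mul_le_of_le_one_right (abs_nonneg x) hweight

lemma abs_reluNum_div_reluDen_sub_max {p : ℝ[X]} {x : ℝ} (hp : p.eval |x| ≠ 0) :
    |(reluNum p).eval x / (reluDen p).eval x - max x 0| =
      |x| * (p.eval (-|x|) ^ 2 / (p.eval |x| ^ 2 + p.eval (-|x|) ^ 2)) := by
  have hden : p.eval |x| ^ 2 + p.eval (-|x|) ^ 2 ≠ 0 := by positivity
  rw [← eval_reluDen_abs, eval_reluDen, eval_reluNum,
    ← abs_of_nonneg (show 0 ≤ p.eval (-|x|) ^ 2 / (p.eval |x| ^ 2 + p.eval (-|x|) ^ 2) by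
      positivity), ← abs_mul]
  rcases le_total 0 x with hx | hx
  · rw [abs_of_nonneg hx] at hden ⊢
    rw [max_eq_left hx, ← abs_neg]
    congr 1
    field_simp
    ring
  · rw [abs_of_nonpos hx, neg_neg, max_eq_right hx, sub_zero, mul_div_assoc]

lemma abs_reluNum_div_reluDen_sub_max_le {p : ℝ[X]} {x δ : ℝ} (hp : p.eval |x| ≠ 0) (hδ : 0 ≤ δ)
    (h : p.eval (-|x|) ^ 2 ≤ δ * p.eval |x| ^ 2) :
    |(reluNum p).eval x / (reluDen p).eval x - max x 0| ≤ |x| * (δ / (1 + δ)) := by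
  rw [abs_reluNum_div_reluDen_sub_max hp]
  refine mul_le_mul_of_nonneg_left ?_ (abs_nonneg x)
  rw [div_le_div_iff₀ (by positivity) (by positivity)]
  linarith

/-- The polynomial with roots `-exp (c i)`. Newman's approximation uses such a polynomial; its
roots are recorded by their logarithms because they are to be spaced in logarithmic scale. -/
noncomputable def newmanPoly {ι : Type*} (s : Finset ι) (c : ι → ℝ) : ℝ[X] :=
  ∏ i ∈ s, (X + C (exp (c i)))

section newmanPoly

variable {ι : Type*} (s : Finset ι) (c : ι → ℝ)

lemma natDegree_newmanPoly : (newmanPoly s c).natDegree = #s := by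
  simp [newmanPoly, natDegree_prod_of_monic _ _ fun i _ => monic_X_add_C (exp (c i))]

lemma eval_newmanPoly (x : ℝ) : (newmanPoly s c).eval x = ∏ i ∈ s, (x + exp (c i)) := by
  simp [newmanPoly, eval_prod]

lemma eval_newmanPoly_pos {x : ℝ} (hx : 0 ≤ x) : 0 < (newmanPoly s c).eval x := by
  rw [eval_newmanPoly]
  exact prod_pos fun i _ => by positivity

lemma abs_eval_neg_newmanPoly_le {x : ℝ} (hx : 0 ≤ x) :
    |(newmanPoly s c).eval (-x)| ≤ (newmanPoly s c).eval x := by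
  simp only [eval_newmanPoly, abs_prod]
  refine prod_le_prod (fun i _ => abs_nonneg _) fun i _ => abs_le.2 ?_
  constructor <;> linarith [exp_pos (c i)]

end newmanPoly

lemma one_sub_le_one_add_mul_exp {y : ℝ} (hy : 0 ≤ y) : 1 - y ≤ (1 + y) * exp (-2 * y) := by
  rcases le_or_gt 1 y with h1 | h1
  · exact (sub_nonpos.2 h1).trans (by positivity)
  have hseries := hasSum_log_sub_log_of_abs_lt_one (x := y) (by rwa [abs_of_nonneg hy])
  have hlog : 2 * y ≤ log (1 + y) - log (1 - y) := by
    simpa using sum_le_hasSum (range 1) (fun k _ => by positivity) hseries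
  rw [← log_le_log_iff (by linarith) (by positivity), log_mul (by linarith) (exp_ne_zero _),
    log_exp]
  linarith

lemma abs_exp_sub_exp_le (c v : ℝ) :
    |exp c - exp v| ≤ exp (-2 * exp (-|c - v|)) * (exp c + exp v) := by
  wlog h : v ≤ c generalizing c v
  · rw [abs_sub_comm, abs_sub_comm c, add_comm]
    exact this v c (le_of_not_ge h)
  have hv : exp v = exp c * exp (-|c - v|) := by
    rw [← exp_add, abs_of_nonneg (sub_nonneg.2 h)]
    ring_nf
  rw [abs_of_nonneg (sub_nonneg.2 (exp_le_exp.2 h))]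
  calc exp c - exp v = exp c * (1 - exp (-|c - v|)) := by rw [hv]; ring
    _ ≤ exp c * ((1 + exp (-|c - v|)) * exp (-2 * exp (-|c - v|))) := by
      gcongr
      exact one_sub_le_one_add_mul_exp (exp_nonneg _)
    _ = exp (-2 * exp (-|c - v|)) * (exp c + exp v) := by rw [hv]; ring

lemma abs_eval_neg_exp_newmanPoly_le {ι : Type*} (s : Finset ι) (c : ι → ℝ) (v : ℝ) :
    |(newmanPoly s c).eval (-exp v)| ≤
      exp (-2 * ∑ i ∈ s, exp (-|c i - v|)) * (newmanPoly s c).eval (exp v) := by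
  rw [mul_sum, exp_sum, eval_newmanPoly, eval_newmanPoly, abs_prod, ← prod_mul_distrib]
  refine prod_le_prod (fun i _ => abs_nonneg _) fun i _ => ?_
  rw [neg_add_eq_sub, add_comm (exp v)]
  exact abs_exp_sub_exp_le (c i) v

lemma continuous_exp_neg_abs_sub (v : ℝ) : Continuous fun x => exp (-|x - v|) := by
  fun_prop

lemma integral_exp_neg_abs_sub {a b v : ℝ} (hv : v ∈ Set.Icc a b) :
    ∫ x in a..b, exp (-|x - v|) = 2 - exp (a - v) - exp (v - b) := by
  have hint (p q : ℝ) := (continuous_exp_neg_abs_sub v).intervalIntegrable p q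
    (μ := MeasureTheory.volume)
  have hleft : ∫ x in a..v, exp (-|x - v|) = 1 - exp (a - v) := by
    calc ∫ x in a..v, exp (-|x - v|) = ∫ x in a..v, exp (x - v) := by
          refine intervalIntegral.integral_congr fun x hx => ?_
          rw [Set.uIcc_of_le hv.1] at hx
          simp only [abs_of_nonpos (sub_nonpos.2 hx.2), neg_neg]
      _ = 1 - exp (a - v) := by
          rw [intervalIntegral.integral_comp_sub_right (fun x => exp x), integral_exp, sub_self,
            exp_zero]
  have hright : ∫ x in v..b, exp (-|x - v|) = 1 - exp (v - b) := by
    calc ∫ x in v..b, exp (-|x - v|) = ∫ x in v..b, exp (v - x) := by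
          refine intervalIntegral.integral_congr fun x hx => ?_
          rw [Set.uIcc_of_le hv.2] at hx
          simp only [abs_of_nonneg (sub_nonneg.2 hx.1), neg_sub]
      _ = 1 - exp (v - b) := by
          rw [intervalIntegral.integral_comp_sub_left (fun x => exp x), integral_exp, sub_self,
            exp_zero]
  rw [← intervalIntegral.integral_add_adjacent_intervals (hint a v) (hint v b), hleft, hright]
  ring

lemma one_sub_exp_le_integral_exp_neg_abs_sub {a b v : ℝ} (hv : v ∈ Set.Icc a b) :
    1 - exp (a - b) ≤ ∫ x in a..b, exp (-|x - v|) := by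
  have hleft : exp (a - v) ≤ 1 := exp_le_one_iff.2 (sub_nonpos.2 hv.1)
  have hright : exp (v - b) ≤ 1 := exp_le_one_iff.2 (sub_nonpos.2 hv.2)
  have hmul : exp (a - b) = exp (a - v) * exp (v - b) := by
    rw [← exp_add, sub_add_sub_cancel]
  rw [integral_exp_neg_abs_sub hv, hmul]
  linarith [mul_nonneg (sub_nonneg.2 hleft) (sub_nonneg.2 hright)]

lemma integral_exp_neg_abs_sub_le_midpoint {a b : ℝ} (hab : a ≤ b) (v : ℝ) :
    ∫ x in a..b, exp (-|x - v|) ≤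
      (b - a) * exp ((b - a) / 2) * exp (-|(a + b) / 2 - v|) := by
  have hpointwise : ∀ x ∈ Set.Icc a b,
      exp (-|x - v|) ≤ exp ((b - a) / 2) * exp (-|(a + b) / 2 - v|) := by
    rintro x ⟨hax, hxb⟩
    have hdist : |(a + b) / 2 - x| ≤ (b - a) / 2 := abs_le.2 ⟨by linarith, by linarith⟩
    rw [← exp_add, exp_le_exp]
    linarith [abs_sub_le ((a + b) / 2) x v]
  calc ∫ x in a..b, exp (-|x - v|)
      ≤ ∫ _ in a..b, exp ((b - a) / 2) * exp (-|(a + b) / 2 - v|) :=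
        intervalIntegral.integral_mono_on hab
          ((continuous_exp_neg_abs_sub v).intervalIntegrable a b)
          intervalIntegrable_const hpointwise
    _ = (b - a) * exp ((b - a) / 2) * exp (-|(a + b) / 2 - v|) := by
        rw [intervalIntegral.integral_const, smul_eq_mul, mul_assoc]

/-- The midpoint of the `k`-th (from `0`) of the `m` equal parts into which `[a, b]` is divided. -/
noncomputable def cellMidpoint (a b : ℝ) (m k : ℕ) : ℝ := a + (k + 1 / 2) * ((b - a) / m)

lemma integral_exp_neg_abs_sub_le_sum_cellMidpoint {a b : ℝ} (hab : a ≤ b) {m : ℕ} (hm : m ≠ 0)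
    (v : ℝ) :
    ∫ x in a..b, exp (-|x - v|) ≤
      (b - a) / m * exp ((b - a) / m / 2) *
        ∑ k ∈ range m, exp (-|cellMidpoint a b m k - v|) := by
  set h : ℝ := (b - a) / m
  have hh : 0 ≤ h := div_nonneg (sub_nonneg.2 hab) m.cast_nonneg
  have hends : ∫ x in a..b, exp (-|x - v|) =
      ∫ x in (a + (0 : ℕ) * h)..(a + m * h), exp (-|x - v|) := by
    rw [Nat.cast_zero, zero_mul, add_zero, mul_div_cancel₀ _ (Nat.cast_ne_zero.2 hm),
      add_sub_cancel]
  rw [hends, ← intervalIntegral.sum_integral_adjacent_intervals fun k _ =>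
    (continuous_exp_neg_abs_sub v).intervalIntegrable (a + k * h) (a + (k + 1 : ℕ) * h), mul_sum]
  refine sum_le_sum fun k _ => ?_
  have hle : a + k * h ≤ a + (k + 1 : ℕ) * h :=
    add_le_add_right (mul_le_mul_of_nonneg_right (Nat.cast_le.2 k.le_succ) hh) a
  have hlen : a + (k + 1 : ℕ) * h - (a + k * h) = h := by push_cast; ring
  have hmid : (a + k * h + (a + (k + 1 : ℕ) * h)) / 2 = cellMidpoint a b m k := by
    rw [cellMidpoint]; push_cast; ring
  simpa only [hlen, hmid] using integral_exp_neg_abs_sub_le_midpoint hle v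

lemma div_one_add_le_one_sub_exp_neg {x : ℝ} (hx : 0 ≤ x) : x / (1 + x) ≤ 1 - exp (-x) := by
  have hexp : exp (-x) ≤ (1 + x)⁻¹ := by
    rw [exp_neg]
    exact inv_anti₀ (by positivity) (by linarith [add_one_le_exp x])
  have hdiv : x / (1 + x) = 1 - (1 + x)⁻¹ := by field_simp; ring
  linarith

lemma sub_half_le_mul_sum_exp_cellMidpoint {a b v : ℝ} (hab : a < b) (hv : v ∈ Set.Icc a b)
    {m : ℕ} (hm : m ≠ 0) :
    m - (b - a) / 2 ≤ (1 + (b - a)) * ∑ k ∈ range m, exp (-|cellMidpoint a b m k - v|) := by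
  set S := ∑ k ∈ range m, exp (-|cellMidpoint a b m k - v|)
  have hsum : 1 - exp (a - b) ≤ (b - a) / m * exp ((b - a) / m / 2) * S :=
    (one_sub_exp_le_integral_exp_neg_abs_sub hv).trans
      (integral_exp_neg_abs_sub_le_sum_cellMidpoint hab.le hm v)
  rw [← neg_sub b a] at hsum
  set V := b - a
  have hVpos : 0 < V := sub_pos.2 hab
  have hcell : V / (1 + V) * exp (-(V / m / 2)) ≤ V / m * S := by
    rw [exp_neg, ← div_eq_mul_inv, div_le_iff₀ (exp_pos _), mul_right_comm]
    exact (div_one_add_le_one_sub_exp_neg hVpos.le).trans hsum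
  have hlin : V / (1 + V) * (1 - V / m / 2) ≤ V / m * S :=
    le_trans (by gcongr; exact one_sub_le_exp_neg _) hcell
  refine le_of_mul_le_mul_left (a := V / (m * (1 + V))) ?_ (by positivity)
  calc V / (m * (1 + V)) * (m - V / 2) = V / (1 + V) * (1 - V / m / 2) := by field_simp
    _ ≤ V / m * S := hlin
    _ = V / (m * (1 + V)) * ((1 + V) * S) := by field_simp

lemma mul_add_log_two_le_of_lt {V r : ℝ} (hV : 0 ≤ V)
    (hr : 3 / π ^ 2 * (V + 3 * log 2) ^ 2 < r + 1) :
    (1 + V) * (V + log 2) ≤ 4 * (r - V / 2) := by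
  have hpi : 3 / 10 ≤ 3 / π ^ 2 := by
    gcongr
    nlinarith [pi_lt_d2, pi_pos]
  have hsq : 3 / 10 * (V + 3 * log 2) ^ 2 < r + 1 :=
    (mul_le_mul_of_nonneg_right hpi (sq_nonneg _)).trans_lt hr
  nlinarith [hsq, log_two_gt_d9, log_two_lt_d9]

lemma log_two_add_le_four_mul_sum_exp_cellMidpoint {a b v : ℝ} (hab : a < b)
    (hv : v ∈ Set.Icc a b) {m : ℕ} (hm : 3 / π ^ 2 * (b - a + 3 * log 2) ^ 2 < m + 1) :
    b - a + log 2 ≤ 4 * ∑ k ∈ range m, exp (-|cellMidpoint a b m k - v|) := by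
  have hV : 0 < b - a := sub_pos.2 hab
  have hquad := mul_add_log_two_le_of_lt hV.le hm
  have hm0 : m ≠ 0 := by
    rintro rfl
    rw [Nat.cast_zero] at hquad
    have : 0 < (1 + (b - a)) * (b - a + log 2) := by positivity
    linarith
  have hsum := sub_half_le_mul_sum_exp_cellMidpoint hab hv hm0
  refine le_of_mul_le_mul_left (a := 1 + (b - a)) ?_ (by positivity)
  linarith

/-- Newman's polynomial with `m` roots, equally spaced in logarithmic scale in `[-β, -α]`. -/
noncomputable def logSpacedPoly (α β : ℝ) (m : ℕ) : ℝ[X] :=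
  newmanPoly (range m) (cellMidpoint (log α) (log β) m)

lemma natDegree_logSpacedPoly (α β : ℝ) (m : ℕ) : (logSpacedPoly α β m).natDegree = m := by
  rw [logSpacedPoly, natDegree_newmanPoly, card_range]

lemma eval_abs_logSpacedPoly_ne_zero (α β : ℝ) (m : ℕ) (x : ℝ) :
    (logSpacedPoly α β m).eval |x| ≠ 0 :=
  (eval_newmanPoly_pos _ _ (abs_nonneg x)).ne'

lemma sq_eval_neg_logSpacedPoly_le {α β x : ℝ} (hα : 0 < α) (hx : x ∈ Set.Ioc α β) {m : ℕ}
    (hm : 3 / π ^ 2 * log (8 * β / α) ^ 2 < m + 1) :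
    (logSpacedPoly α β m).eval (-x) ^ 2 ≤ α / (2 * β) * (logSpacedPoly α β m).eval x ^ 2 := by
  have hx0 : 0 < x := hα.trans hx.1
  have hβ : 0 < β := hx0.trans_le hx.2
  have hlog : log (8 * β / α) = log β - log α + 3 * log 2 := by
    rw [log_div (by positivity) hα.ne', log_mul (by norm_num) hβ.ne',
      show (8 : ℝ) = 2 ^ 3 by norm_num, log_pow]
    push_cast
    ring
  have hsum := log_two_add_le_four_mul_sum_exp_cellMidpoint
    (log_lt_log hα (hx.1.trans_le hx.2))
    ⟨log_le_log hα hx.1.le, log_le_log hx0 hx.2⟩ (hlog ▸ hm)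
  have hfactor := abs_eval_neg_exp_newmanPoly_le (range m)
    (cellMidpoint (log α) (log β) m) (log x)
  set S := ∑ k ∈ range m, exp (-|cellMidpoint (log α) (log β) m k - log x|)
  rw [exp_log hx0] at hfactor
  have hexp : exp (-2 * S) ^ 2 ≤ α / (2 * β) := by
    rw [← exp_nat_mul, ← le_log_iff_exp_le (by positivity), log_div hα.ne' (by positivity),
      log_mul two_ne_zero hβ.ne']
    push_cast
    linarith
  calc (logSpacedPoly α β m).eval (-x) ^ 2
      ≤ (exp (-2 * S) * (logSpacedPoly α β m).eval x) ^ 2 :=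
        sq_le_sq' (neg_le_of_abs_le hfactor) (le_of_abs_le hfactor)
    _ = exp (-2 * S) ^ 2 * (logSpacedPoly α β m).eval x ^ 2 := mul_pow _ _ _
    _ ≤ α / (2 * β) * (logSpacedPoly α β m).eval x ^ 2 := by gcongr

lemma abs_relu_logSpacedPoly_sub_max_le {t ε x : ℝ} (hε : 0 < ε) (hx : |x| ≤ t) {m : ℕ}
    (hm : 3 / π ^ 2 * log (4 * t / ε) ^ 2 < m + 1) :
    |(reluNum (logSpacedPoly (2 * ε) t m)).eval x / (reluDen (logSpacedPoly (2 * ε) t m)).eval x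
      - max x 0| ≤ ε := by
  have hp := eval_abs_logSpacedPoly_ne_zero (2 * ε) t m x
  rcases le_or_gt |x| (2 * ε) with hsmall | hlarge
  · have hle : (logSpacedPoly (2 * ε) t m).eval (-|x|) ^ 2 ≤
        1 * (logSpacedPoly (2 * ε) t m).eval |x| ^ 2 := by
      have habs := abs_eval_neg_newmanPoly_le (range m)
        (cellMidpoint (log (2 * ε)) (log t) m) (abs_nonneg x)
      rw [one_mul]
      exact sq_le_sq' (neg_le_of_abs_le habs) (le_of_abs_le habs)
    linarith [abs_reluNum_div_reluDen_sub_max_le hp zero_le_one hle]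
  · have ht : 0 < t := by linarith
    have hm' : 3 / π ^ 2 * log (8 * t / (2 * ε)) ^ 2 < m + 1 := by
      rwa [show 8 * t / (2 * ε) = 4 * t / ε by field_simp; norm_num]
    have hle := sq_eval_neg_logSpacedPoly_le (by positivity) ⟨hlarge, hx⟩ hm'
    rw [mul_div_mul_left _ _ two_ne_zero] at hle
    have hδ : 0 ≤ ε / t := by positivity
    calc _ ≤ |x| * (ε / t / (1 + ε / t)) := abs_reluNum_div_reluDen_sub_max_le hp hδ hle
      _ ≤ t * (ε / t) := by
        exact mul_le_mul hx (div_le_self hδ (by linarith)) (by positivity) ht.le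
      _ = ε := mul_div_cancel₀ ε ht.ne'

end

/-- Rational approximation of ReLU: for `0 < ε < t` there are polynomials `P, Q`
with `deg P ≤ 1 + Δ`, `deg Q ≤ Δ`, `Δ ≤ (6/π²)·log²(4t/ε)`, such that `Q` has no
zeros on `[−t, t]` and `|P/Q − ReLU| ≤ ε` and `|P/Q| ≤ t` on `[−t, t]`. -/
theorem rational_approx_relu (t ε : ℝ) (ht : 0 < t) (hε : 0 < ε) (hεt : ε < t) :
    ∃ Δ : ℕ, (Δ : ℝ) ≤ 6 / Real.pi ^ 2 * Real.log (4 * t / ε) ^ 2 ∧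
      ∃ P Q : Polynomial ℝ, P.natDegree ≤ 1 + Δ ∧ Q.natDegree ≤ Δ ∧
        ∀ x ∈ Set.Icc (-t) t, Q.eval x ≠ 0 ∧
          |P.eval x / Q.eval x - max x 0| ≤ ε ∧ |P.eval x / Q.eval x| ≤ t := by
  set m := ⌊3 / Real.pi ^ 2 * Real.log (4 * t / ε) ^ 2⌋₊
  set p := logSpacedPoly (2 * ε) t m
  have hdeg : p.natDegree = m := natDegree_logSpacedPoly _ _ _
  have hm : (m : ℝ) ≤ 3 / Real.pi ^ 2 * Real.log (4 * t / ε) ^ 2 := Nat.floor_le (by positivity)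
  refine ⟨2 * m, ?_, reluNum p, reluDen p, hdeg ▸ natDegree_reluNum_le p,
    hdeg ▸ natDegree_reluDen_le p, fun x hx => ?_⟩
  · push_cast
    calc 2 * (m : ℝ) ≤ 2 * (3 / Real.pi ^ 2 * Real.log (4 * t / ε) ^ 2) := by gcongr
      _ = 6 / Real.pi ^ 2 * Real.log (4 * t / ε) ^ 2 := by ring
  have hxt : |x| ≤ t := abs_le.2 hx
  exact ⟨(eval_reluDen_pos (eval_abs_logSpacedPoly_ne_zero _ _ _ x)).ne',
    abs_relu_logSpacedPoly_sub_max_le hε hxt (Nat.lt_floor_add_one _),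
    (abs_reluNum_div_reluDen_le p x).trans hxt⟩
end

section
/- There exists an absolute constant C > 0 with the following property. Let L ≥ 1 and let d₀, d₁, …, d_L be integers with each d_i ≥ 2, and let ω₁, …, ω_L be reals with each ω_i ≥ 2. Let F be the class of ReLU networks f : ℝ^{d₀} → ℝ^{d_L} of the form f(x) = σ(A_L·σ(⋯σ(A_1·x + b_1)⋯) + b_L), where σ is the entrywise ReLU u ↦ max(u, 0), A_i ∈ ℝ^{d_i×d_{i−1}}, b_i ∈ ℝ^{d_i}, and for each i every row of the augmented matrix (A_i | b_i) has ℓ¹ norm at most ω_i. Let Y be any set, H > 0, and let ℓ : ℝ^{d_L} × Y → [0, H] be Lipschitz in its first argument with respect to the Euclidean norm, with Lipschitz constant ‖ℓ‖_lip > 0. Set N = Σ_{i=1}^L d_i·(d_{i−1} + 1), α = min{H, ‖ℓ‖_lip·√(d_L)·∏_{i=1}^L ω_i}, and β = α^{−1}·‖ℓ‖_lip·√(d_L)·∏_{i=1}^L ω_i. Then for every n ≥ 1 and every sample (x₁, y₁), …, (x_n, y_n) ∈ ℝ^{d₀} × Y with ‖x_i‖_∞ ≤ 1 for all i, the empirical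 Rademacher complexity R_S(F; ℓ) = 2^{−n}·Σ_{σ ∈ {−1,1}^n} sup_{f ∈ F} (1/n)·Σ_{i=1}^n σ_i·ℓ(f(x_i), y_i) satisfies R_S(F; ℓ) ≤ C·α·√(N/n)·( log β + log n + Σ_{i=1}^L log d_i + L·log₊ log₊(β·√(n/d_L)) )^{1/2}, where log₊(x) = max{0, log x}. -/
/-- `logPlus x = max(0, log x)`. -/
noncomputable def logPlus (x : ℝ) : ℝ := max 0 (Real.log x)

/-- Evaluation of the first `k` layers of a fully connected ReLU network with
layer widths `dm 0, dm 1, …`, weight matrices `A i` and biases `b i`: each layer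
applies the entrywise ReLU `u ↦ max(u, 0)` after the affine map. -/
def reluNet (dm : ℕ → ℕ) (A : ∀ i : ℕ, Matrix (Fin (dm (i + 1))) (Fin (dm i)) ℝ)
    (b : ∀ i : ℕ, Fin (dm (i + 1)) → ℝ) :
    (k : ℕ) → (Fin (dm 0) → ℝ) → Fin (dm k) → ℝ
  | 0, x => x
  | k + 1, x => fun j => max ((A k).mulVec (reluNet dm A b k x) j + b k j) 0

/-!
The augmented matrices `(A | b)` of one layer, normed by their largest `ℓ¹` row norm, form a normed
space whose dimension is the number of parameters of the layer. Volume comparison gives its balls of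
radius `ω` nets of relative mesh `ε` with at most `(3/ε)^dim` points. As a layer is Lipschitz in
its augmented matrix and in its input, the nets of all layers combine into at most `(3/ε)^N` points
of sample values approximating every network within `L ε ∏ ω` in the supremum norm. The loss varies
by at most `α` over these points, so Massart's finite class lemma, applied with `ε = 1 / (L β n)`,
bounds the complexity by `α √(2 N log (3 L β n) / n) + α / n`. Finally `log L` is dominated by
`∑ log dᵢ`.
-/

open Finset Metric MeasureTheory Module
open scoped BigOperators

section Covering

variable {E : Type*} [NormedAddCommGroup E] [NormedSpace ℝ E] [FiniteDimensional ℝ E]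

theorem card_le_of_subset_closedBall_of_pairwise_lt_dist {s : Finset E} {x : E} {r ε : ℝ}
    (hr : 0 ≤ r) (hε : 0 < ε) (hs : ↑s ⊆ closedBall x r)
    (hsep : (s : Set E).Pairwise (ε < dist · ·)) :
    (#s : ℝ) ≤ (1 + 2 * r / ε) ^ finrank ℝ E := by
  borelize E
  let μ : Measure E := Measure.addHaar
  have hdisj : (s : Set E).PairwiseDisjoint fun y => closedBall y (ε / 2) := fun y hy z hz hyz =>
    closedBall_disjoint_closedBall (by linarith [hsep hy hz hyz])
  have hsub : ⋃ y ∈ s, closedBall y (ε / 2) ⊆ closedBall x (r + ε / 2) :=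
    Set.iUnion₂_subset fun y hy =>
      closedBall_subset_closedBall' (by linarith [mem_closedBall.1 (hs hy)])
  have hvol : #s * ((ε / 2) ^ finrank ℝ E * μ.real (ball 0 1)) ≤
      (r + ε / 2) ^ finrank ℝ E * μ.real (ball 0 1) := by
    calc #s * ((ε / 2) ^ finrank ℝ E * μ.real (ball 0 1))
        = μ.real (⋃ y ∈ s, closedBall y (ε / 2)) := by
          rw [measureReal_biUnion_finset hdisj (fun _ _ => measurableSet_closedBall)
            fun _ _ => measure_closedBall_lt_top.ne]
          simp only [μ.addHaar_real_closedBall _ (half_pos hε).le, sum_const, nsmul_eq_mul]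
      _ ≤ μ.real (closedBall x (r + ε / 2)) :=
          measureReal_mono hsub measure_closedBall_lt_top.ne
      _ = (r + ε / 2) ^ finrank ℝ E * μ.real (ball 0 1) :=
          μ.addHaar_real_closedBall x (by positivity)
  have hball : 0 < μ.real (ball (0 : E) 1) :=
    ENNReal.toReal_pos (measure_ball_pos μ 0 one_pos).ne' measure_ball_lt_top.ne
  rw [← mul_assoc, mul_le_mul_iff_left₀ hball, ← le_div_iff₀ (by positivity), ← div_pow] at hvol
  rwa [show (r + ε / 2) / (ε / 2) = 1 + 2 * r / ε by field_simp; ring] at hvol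

theorem packingNumber_closedBall_ne_top (x : E) (r : ℝ) {ε : NNReal} (hε : ε ≠ 0) :
    packingNumber ε (closedBall x r) ≠ ⊤ := by
  obtain ⟨N, -, hN, hcover⟩ := exists_finite_isCover_of_isCompact (ε := ε / 2)
    (by simpa using hε) (isCompact_closedBall x r)
  have hle := (packingNumber_two_mul_le_externalCoveringNumber (ε / 2) (closedBall x r)).trans
    hcover.externalCoveringNumber_le_encard
  rw [mul_div_cancel₀ ε two_ne_zero] at hle
  exact (hle.trans_lt hN.encard_lt_top).ne

theorem exists_finset_cover_closedBall (x : E) {r ε : ℝ} (hr : 0 ≤ r) (hε : 0 < ε) :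
    ∃ s : Finset E, ↑s ⊆ closedBall x r ∧ (∀ y ∈ closedBall x r, ∃ z ∈ s, dist y z ≤ ε) ∧
      (#s : ℝ) ≤ (1 + 2 * r / ε) ^ finrank ℝ E := by
  lift ε to NNReal using hε.le
  have hpack := packingNumber_closedBall_ne_top x r (by exact_mod_cast hε.ne' : ε ≠ 0)
  obtain ⟨s, hs⟩ := (Set.encard_ne_top_iff.1
    (encard_maximalSeparatedSet hpack ▸ hpack)).exists_finset_coe
  have hsub : ↑s ⊆ closedBall x r := hs ▸ maximalSeparatedSet_subset
  have hsep : (s : Set E).Pairwise (ε < dist · ·) := fun y hy z hz hyz => by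
    have hlt : (ε : ENNReal) < edist y z :=
      isSeparated_maximalSeparatedSet (hs ▸ hy) (hs ▸ hz) hyz
    rwa [edist_nndist, ENNReal.coe_lt_coe, ← NNReal.coe_lt_coe, coe_nndist] at hlt
  refine ⟨s, hsub, fun y hy => ?_,
    card_le_of_subset_closedBall_of_pairwise_lt_dist hr hε hsub hsep⟩
  obtain ⟨z, hz, hyz⟩ := isCover_maximalSeparatedSet hpack hy
  refine ⟨z, Finset.mem_coe.1 (hs ▸ hz), ?_⟩
  change edist y z ≤ ε at hyz
  rwa [edist_nndist, ENNReal.coe_le_coe, ← NNReal.coe_le_coe, coe_nndist] at hyz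

theorem exists_finset_cover_closedBall_mul (x : E) {r ε : ℝ} (hr : 0 < r) (hε : 0 < ε)
    (hε1 : ε ≤ 1) :
    ∃ s : Finset E, ↑s ⊆ closedBall x r ∧ (∀ y ∈ closedBall x r, ∃ z ∈ s, dist y z ≤ ε * r) ∧
      (#s : ℝ) ≤ (3 / ε) ^ finrank ℝ E := by
  obtain ⟨s, hsub, hcover, hcard⟩ := exists_finset_cover_closedBall x hr.le (mul_pos hε hr)
  refine ⟨s, hsub, hcover, hcard.trans (pow_le_pow_left₀ (by positivity) ?_ _)⟩
  calc 1 + 2 * r / (ε * r) = (ε + 2) / ε := by field_simp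
    _ ≤ 3 / ε := by gcongr; linarith

end Covering

section Rademacher

theorem expect_prod_eq_prod_expect {ι κ K : Type*} [Fintype ι] [DecidableEq ι] [Fintype κ]
    [Field K] [CharZero K] (f : ι → κ → K) :
    𝔼 s : ι → κ, ∏ i, f i (s i) = ∏ i, 𝔼 c, f i c := by
  simp only [Fintype.expect_eq_sum_div_card, prod_div_distrib, Fintype.prod_sum, prod_const,
    Fintype.card_fun, Nat.cast_pow, card_univ]

theorem exp_expect_le_expect_exp {κ : Type*} [Fintype κ] [Nonempty κ] (f : κ → ℝ) :
    Real.exp (𝔼 k, f k) ≤ 𝔼 k, Real.exp (f k) := by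
  have hcard : (Fintype.card κ : ℝ) ≠ 0 := by positivity
  have := convexOn_exp.map_sum_le (t := univ) (w := fun _ : κ => (Fintype.card κ : ℝ)⁻¹) (p := f)
    (fun _ _ => by positivity) (by simp [hcard]) (fun _ _ => Set.mem_univ _)
  simpa only [Fintype.expect_eq_sum_div_card, div_eq_inv_mul, mul_sum, smul_eq_mul] using this

variable {ι : Type*} [Fintype ι]

/-- The correlation `(1/n) ∑ᵢ σᵢ vᵢ` of a vector `v` with a sign vector `σ`; the Boolean `true`
encodes the sign `+1` and `false` the sign `-1`. -/
noncomputable def signedMean (s : ι → Bool) (v : ι → ℝ) : ℝ :=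
  (1 / Fintype.card ι) * ∑ i, (if s i then (1 : ℝ) else -1) * v i

theorem signedMean_add (s : ι → Bool) (u v : ι → ℝ) :
    signedMean s (u + v) = signedMean s u + signedMean s v := by
  simp only [signedMean, Pi.add_apply, mul_add, sum_add_distrib]

theorem signedMean_le [Nonempty ι] (s : ι → Bool) {v : ι → ℝ} {e : ℝ} (hv : ∀ i, |v i| ≤ e) :
    signedMean s v ≤ e := by
  have hsum : ∑ i, (if s i then (1 : ℝ) else -1) * v i ≤ Fintype.card ι * e := by
    rw [← nsmul_eq_mul, ← card_univ]
    refine sum_le_card_nsmul _ _ _ fun i _ => ?_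
    cases s i <;> simp [(abs_le.1 (hv i)).2, neg_le.1 (abs_le.1 (hv i)).1]
  rw [signedMean, one_div, inv_mul_le_iff₀ (by positivity)]
  exact hsum

variable [DecidableEq ι]

theorem expect_signedMean (v : ι → ℝ) : 𝔼 s, signedMean s v = 0 := by
  have hflip : 𝔼 s, signedMean s v = 𝔼 s, -signedMean s v := by
    refine Fintype.expect_equiv (Equiv.piCongrRight fun _ => Equiv.boolNot) _ _ fun s => ?_
    simp only [signedMean, ← mul_neg, ← sum_neg_distrib]
    refine congrArg _ (sum_congr rfl fun i _ => ?_)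
    cases h : s i <;> simp [h]
  rw [expect_neg_distrib] at hflip
  linarith

theorem expect_exp_signedMean_le [Nonempty ι] (c : ℝ) {v : ι → ℝ} {a : ℝ} (hv : ∀ i, |v i| ≤ a) :
    𝔼 s, Real.exp (c * signedMean s v) ≤ Real.exp (c ^ 2 * a ^ 2 / (2 * Fintype.card ι)) := by
  set n : ℝ := (Fintype.card ι : ℝ) with hn
  have hn0 : 0 < n := by positivity
  have hcosh (i : ι) : 𝔼 b : Bool, Real.exp (c / n * ((if b then (1 : ℝ) else -1) * v i)) =
      Real.cosh (c / n * v i) := by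
    rw [Fintype.expect_eq_sum_div_card]
    simp [Real.cosh_eq]
  calc 𝔼 s, Real.exp (c * signedMean s v)
      = 𝔼 s : ι → Bool, ∏ i, Real.exp (c / n * ((if s i then (1 : ℝ) else -1) * v i)) := by
        refine expect_congr rfl fun s _ => ?_
        rw [← Real.exp_sum, ← mul_sum, signedMean]
        congr 1
        ring
    _ = ∏ i, Real.cosh (c / n * v i) := by
        rw [expect_prod_eq_prod_expect
          fun i (b : Bool) => Real.exp (c / n * ((if b then (1 : ℝ) else -1) * v i))]
        exact prod_congr rfl fun i _ => hcosh i
    _ ≤ ∏ _i : ι, Real.exp ((c / n) ^ 2 * a ^ 2 / 2) := by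
        refine prod_le_prod (fun i _ => (Real.cosh_pos _).le) fun i _ => ?_
        refine (Real.cosh_le_exp_half_sq _).trans (Real.exp_le_exp.2 ?_)
        rw [mul_pow]
        gcongr ?_ * ?_ / _
        exact sq_le_sq.2 ((hv i).trans (le_abs_self a))
    _ = Real.exp (c ^ 2 * a ^ 2 / (2 * n)) := by
        rw [prod_const, card_univ, ← Real.exp_nat_mul, ← hn]
        congr 1
        field_simp

/-- The empirical Rademacher complexity of a set of value vectors on an `n`-point sample indexed by
`ι`. The supremum is `sSup` in `ℝ`, hence meaningful for bounded nonempty `V`. -/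
noncomputable def empiricalRademacher (V : Set (ι → ℝ)) : ℝ :=
  𝔼 s : ι → Bool, sSup (signedMean s '' V)

theorem mul_empiricalRademacher_le [Nonempty ι] {T : Finset (ι → ℝ)} (hT : T.Nonempty) {a : ℝ}
    (ha : ∀ t ∈ T, ∀ i, |t i| ≤ a) (c : ℝ) :
    c * empiricalRademacher (T : Set (ι → ℝ)) ≤
      Real.log #T + c ^ 2 * a ^ 2 / (2 * Fintype.card ι) := by
  have hsup (s : ι → Bool) : Real.exp (c * sSup (signedMean s '' T)) ≤
      ∑ t ∈ T, Real.exp (c * signedMean s t) := by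
    obtain ⟨t, ht, hts⟩ := (hT.to_set.image (signedMean s)).csSup_mem (T.finite_toSet.image _)
    rw [← hts]
    exact single_le_sum (f := fun t => Real.exp (c * signedMean s t))
      (fun _ _ => (Real.exp_pos _).le) ht
  have hexp : Real.exp (c * empiricalRademacher (T : Set (ι → ℝ))) ≤
      #T * Real.exp (c ^ 2 * a ^ 2 / (2 * Fintype.card ι)) := by
    calc Real.exp (c * empiricalRademacher (T : Set (ι → ℝ)))
        ≤ 𝔼 s : ι → Bool, Real.exp (c * sSup (signedMean s '' T)) := by
          rw [empiricalRademacher, mul_expect]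
          exact exp_expect_le_expect_exp _
      _ ≤ 𝔼 s : ι → Bool, ∑ t ∈ T, Real.exp (c * signedMean s t) :=
          expect_le_expect fun s _ => hsup s
      _ = ∑ t ∈ T, 𝔼 s : ι → Bool, Real.exp (c * signedMean s t) := expect_sum_comm _ _ _
      _ ≤ #T * Real.exp (c ^ 2 * a ^ 2 / (2 * Fintype.card ι)) := by
          rw [← nsmul_eq_mul]
          exact sum_le_card_nsmul _ _ _ fun t ht => expect_exp_signedMean_le c (ha t ht)
  have hcard : (#T : ℝ) ≠ 0 := by simpa using hT.ne_empty
  rwa [← Real.le_log_iff_exp_le (by positivity), Real.log_mul hcard (Real.exp_ne_zero _),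
    Real.log_exp] at hexp

/- The exponential-moment bound is a quadratic inequality in `c` valid for both signs of `c`, so its
discriminant is nonpositive; no optimal `c` has to be chosen. -/
theorem empiricalRademacher_le_of_finset [Nonempty ι] {T : Finset (ι → ℝ)} (hT : T.Nonempty)
    {a : ℝ} (ha : ∀ t ∈ T, ∀ i, |t i| ≤ a) :
    empiricalRademacher (T : Set (ι → ℝ)) ≤ a * √(2 * Real.log #T / Fintype.card ι) := by
  set R := empiricalRademacher (T : Set (ι → ℝ))
  set n : ℝ := (Fintype.card ι : ℝ)
  have ha0 : 0 ≤ a := by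
    obtain ⟨t, ht⟩ := hT
    exact (abs_nonneg _).trans (ha t ht (Classical.arbitrary ι))
  have hdiscrim : discrim (a ^ 2 / (2 * n)) (-R) (Real.log #T) ≤ 0 :=
    discrim_le_zero fun c => by linear_combination mul_empiricalRademacher_le hT ha c
  have hsq : R ^ 2 ≤ a ^ 2 * (2 * Real.log #T / n) := by
    rw [discrim] at hdiscrim
    linear_combination hdiscrim
  calc R ≤ √(a ^ 2 * (2 * Real.log #T / n)) := Real.le_sqrt_of_sq_le hsq
    _ = a * √(2 * Real.log #T / n) := by rw [Real.sqrt_mul (sq_nonneg a), Real.sqrt_sq ha0]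

theorem empiricalRademacher_le_add [Nonempty ι] {V : Set (ι → ℝ)} (hV : V.Nonempty)
    {T : Finset (ι → ℝ)} (c : ι → ℝ) {e : ℝ}
    (hVT : ∀ v ∈ V, ∃ t ∈ T, ∀ i, |v i - (c i + t i)| ≤ e) :
    empiricalRademacher V ≤ empiricalRademacher (T : Set (ι → ℝ)) + e := by
  have hsup (s : ι → Bool) :
      sSup (signedMean s '' V) ≤ signedMean s c + (sSup (signedMean s '' T) + e) := by
    refine csSup_le (hV.image _) ?_
    rintro _ ⟨v, hv, rfl⟩
    obtain ⟨t, ht, hvt⟩ := hVT v hv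
    calc signedMean s v = signedMean s c + (signedMean s t + signedMean s (v - (c + t))) := by
          rw [← signedMean_add, ← signedMean_add]
          congr 1
          abel
      _ ≤ signedMean s c + (sSup (signedMean s '' T) + e) := by
          gcongr
          · exact le_csSup (T.finite_toSet.image _).bddAbove (Set.mem_image_of_mem _ ht)
          · exact signedMean_le s hvt
  calc empiricalRademacher V
      ≤ 𝔼 s : ι → Bool, (signedMean s c + (sSup (signedMean s '' T) + e)) :=
        expect_le_expect fun s _ => hsup s
    _ = empiricalRademacher (T : Set (ι → ℝ)) + e := by
        rw [expect_add_distrib, expect_signedMean, expect_add_distrib, Fintype.expect_const,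
          zero_add, empiricalRademacher]

end Rademacher

section Networks

variable {ρ κ ι : Type*} [Fintype ρ] [Fintype κ] [Fintype ι]

/-- Augmented matrices `(A | b)` with rows indexed by `ρ` and columns by `κ`; the extra column
`none` is the bias. Each row carries the `ℓ¹` norm and the product the supremum norm, so `‖W‖` is
the largest `ℓ¹` norm of a row. -/
abbrev AugMatrix (ρ κ : Type*) : Type _ := ρ → PiLp 1 fun _ : Option κ => ℝ

theorem finrank_augMatrix :
    finrank ℝ (AugMatrix ρ κ) = Fintype.card ρ * (Fintype.card κ + 1) := by
  rw [finrank_pi_fintype, (WithLp.linearEquiv 1 ℝ (Option κ → ℝ)).finrank_eq]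
  simp

/-- The augmented matrix `(A | b)`, with the `ℓ¹` norm on its rows. -/
def augmentedMatrix (A : Matrix ρ κ ℝ) (b : ρ → ℝ) : AugMatrix ρ κ :=
  fun r => WithLp.toLp 1 fun o => o.elim (b r) (A r)

theorem norm_augmentedMatrix_le {A : Matrix ρ κ ℝ} {b : ρ → ℝ} {w : ℝ} (hw : 0 ≤ w)
    (h : ∀ r, ∑ j, |A r j| + |b r| ≤ w) : ‖augmentedMatrix A b‖ ≤ w := by
  refine (pi_norm_le_iff_of_nonneg hw).2 fun r => ?_
  simpa [augmentedMatrix, PiLp.norm_eq_of_L1, Fintype.sum_option, add_comm] using h r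

/-- The homogeneous coordinates `(u, 1)` of `u`, with the `1` at `none`: they turn the affine map
`u ↦ A u + b` into multiplication by `(A | b)`. -/
def homogenize (u : κ → ℝ) : Option κ → ℝ := fun o => o.elim 1 u

theorem norm_homogenize_le (u : κ → ℝ) : ‖homogenize u‖ ≤ max 1 ‖u‖ := by
  refine (pi_norm_le_iff_of_nonneg (by positivity)).2 fun o => ?_
  cases o with
  | none => simp [homogenize]
  | some j => exact (norm_le_pi_norm u j).trans (le_max_right _ _)

theorem norm_homogenize_sub_le (u v : κ → ℝ) : ‖homogenize u - homogenize v‖ ≤ ‖u - v‖ := by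
  refine (pi_norm_le_iff_of_nonneg (norm_nonneg _)).2 fun o => ?_
  cases o with
  | none => simp [homogenize]
  | some j => exact norm_le_pi_norm (u - v) j

theorem abs_sum_mul_le_norm_mul_norm (g : PiLp 1 fun _ : κ => ℝ) (v : κ → ℝ) :
    |∑ j, g j * v j| ≤ ‖g‖ * ‖v‖ := by
  calc |∑ j, g j * v j| ≤ ∑ j, |g j| * |v j| := by
        simpa only [abs_mul] using abs_sum_le_sum_abs (fun j => g j * v j) univ
    _ ≤ ∑ j, |g j| * ‖v‖ := by
        gcongr with j
        exact norm_le_pi_norm v j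
    _ = ‖g‖ * ‖v‖ := by
        rw [← sum_mul, PiLp.norm_eq_of_L1]
        rfl

/-- One layer `u ↦ max(A u + b, 0)` of a network, as a function of its augmented matrix. -/
def reluLayer (W : AugMatrix ρ κ) (u : κ → ℝ) : ρ → ℝ :=
  fun r => max (∑ o, W r o * homogenize u o) 0

theorem norm_reluLayer_le (W : AugMatrix ρ κ) (u : κ → ℝ) :
    ‖reluLayer W u‖ ≤ ‖W‖ * max 1 ‖u‖ := by
  refine (pi_norm_le_iff_of_nonneg (by positivity)).2 fun r => ?_
  calc |max (∑ o, W r o * homogenize u o) 0|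
      ≤ |∑ o, W r o * homogenize u o| := by
        simpa using abs_max_sub_max_le_abs (∑ o, W r o * homogenize u o) 0 0
    _ ≤ ‖W r‖ * ‖homogenize u‖ := abs_sum_mul_le_norm_mul_norm _ _
    _ ≤ ‖W‖ * max 1 ‖u‖ := by
        gcongr
        · exact norm_le_pi_norm W r
        · exact norm_homogenize_le u

theorem norm_reluLayer_sub_le (W V : AugMatrix ρ κ) (u v : κ → ℝ) :
    ‖reluLayer W u - reluLayer V v‖ ≤ ‖W‖ * ‖u - v‖ + ‖W - V‖ * max 1 ‖v‖ := by
  refine (pi_norm_le_iff_of_nonneg (by positivity)).2 fun r => ?_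
  have hsplit : ∑ o, W r o * homogenize u o - ∑ o, V r o * homogenize v o =
      ∑ o, W r o * (homogenize u - homogenize v) o + ∑ o, (W - V) r o * homogenize v o := by
    rw [← sum_sub_distrib, ← sum_add_distrib]
    refine sum_congr rfl fun o _ => ?_
    simp only [Pi.sub_apply, PiLp.sub_apply]
    ring
  calc |max (∑ o, W r o * homogenize u o) 0 - max (∑ o, V r o * homogenize v o) 0|
      ≤ |∑ o, W r o * homogenize u o - ∑ o, V r o * homogenize v o| :=
        abs_max_sub_max_le_abs _ _ _
    _ ≤ ‖W r‖ * ‖homogenize u - homogenize v‖ + ‖(W - V) r‖ * ‖homogenize v‖ := by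
        rw [hsplit]
        exact (abs_add_le _ _).trans
          (add_le_add (abs_sum_mul_le_norm_mul_norm _ _) (abs_sum_mul_le_norm_mul_norm _ _))
    _ ≤ ‖W‖ * ‖u - v‖ + ‖W - V‖ * max 1 ‖v‖ := by
        gcongr
        · exact norm_le_pi_norm W r
        · exact norm_homogenize_sub_le u v
        · exact norm_le_pi_norm (W - V) r
        · exact norm_homogenize_le v

theorem exists_cover_reluLayer {T : Finset (ι → κ → ℝ)} {B w ε : ℝ} (hB : 1 ≤ B)
    (hT : ∀ t ∈ T, ‖t‖ ≤ B) (hw : 0 < w) (hε : 0 < ε) (hε1 : ε ≤ 1) :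
    ∃ T' : Finset (ι → ρ → ℝ),
      (#T' : ℝ) ≤ (3 / ε) ^ (Fintype.card ρ * (Fintype.card κ + 1)) * #T ∧
      (∀ t ∈ T', ‖t‖ ≤ w * B) ∧
      ∀ W : AugMatrix ρ κ, ‖W‖ ≤ w → ∀ u : ι → κ → ℝ, ∀ t ∈ T,
        ∃ t' ∈ T', ‖(fun i => reluLayer W (u i)) - t'‖ ≤ w * (‖u - t‖ + ε * B) := by
  classical
  obtain ⟨S, hS, hcover, hcard⟩ :=
    exists_finset_cover_closedBall_mul (0 : AugMatrix ρ κ) hw hε hε1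
  have hmax {t : ι → κ → ℝ} (ht : t ∈ T) (i : ι) : max 1 ‖t i‖ ≤ B :=
    max_le hB ((norm_le_pi_norm t i).trans (hT t ht))
  refine ⟨image₂ (fun V t i => reluLayer V (t i)) S T, ?_, ?_, fun W hW u t ht => ?_⟩
  · rw [finrank_augMatrix] at hcard
    calc (#(image₂ (fun V t i => reluLayer V (t i)) S T) : ℝ) ≤ #S * #T := by
          rw [← Nat.cast_mul]
          exact Nat.cast_le.2 (card_image₂_le _ S T)
      _ ≤ _ := by gcongr
  · intro t' ht'
    obtain ⟨V, hV, t, ht, rfl⟩ := mem_image₂.1 ht'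
    refine (pi_norm_le_iff_of_nonneg (by positivity)).2 fun i => ?_
    refine (norm_reluLayer_le V (t i)).trans ?_
    gcongr
    · exact mem_closedBall_zero_iff.1 (hS hV)
    · exact hmax ht i
  · obtain ⟨V, hV, hWV⟩ := hcover W (mem_closedBall_zero_iff.2 hW)
    rw [dist_eq_norm] at hWV
    refine ⟨_, mem_image₂_of_mem hV ht, (pi_norm_le_iff_of_nonneg (by positivity)).2 fun i => ?_⟩
    calc ‖reluLayer W (u i) - reluLayer V (t i)‖
        ≤ ‖W‖ * ‖u i - t i‖ + ‖W - V‖ * max 1 ‖t i‖ := norm_reluLayer_sub_le _ _ _ _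
      _ ≤ w * ‖u - t‖ + ε * w * B := by
          gcongr
          · exact norm_le_pi_norm (u - t) i
          · exact hmax ht i
      _ = w * (‖u - t‖ + ε * B) := by ring

/-- The class of functions computed by the first `k` layers of ReLU networks with widths `dm`, where
every row of the `i`-th augmented matrix has `ℓ¹` norm at most `ω i`. -/
def reluClass (dm : ℕ → ℕ) (ω : ℕ → ℝ) (k : ℕ) : Set ((Fin (dm 0) → ℝ) → Fin (dm k) → ℝ) :=
  {f | ∃ (A : ∀ i : ℕ, Matrix (Fin (dm (i + 1))) (Fin (dm i)) ℝ)
      (b : ∀ i : ℕ, Fin (dm (i + 1)) → ℝ),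
    (∀ i < k, ∀ r, ∑ j, |A i r j| + |b i r| ≤ ω i) ∧ f = reluNet dm A b k}

theorem reluNet_succ (dm : ℕ → ℕ) (A : ∀ i : ℕ, Matrix (Fin (dm (i + 1))) (Fin (dm i)) ℝ)
    (b : ∀ i : ℕ, Fin (dm (i + 1)) → ℝ) (k : ℕ) (x : Fin (dm 0) → ℝ) :
    reluNet dm A b (k + 1) x = reluLayer (augmentedMatrix (A k) (b k)) (reluNet dm A b k x) := by
  funext r
  simp [reluNet, reluLayer, augmentedMatrix, homogenize, Fintype.sum_option, Matrix.mulVec,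
    dotProduct, add_comm]

theorem exists_reluLayer_of_mem_reluClass_succ {dm : ℕ → ℕ} {ω : ℕ → ℝ} {k : ℕ} (hω : 0 ≤ ω k)
    {f : (Fin (dm 0) → ℝ) → Fin (dm (k + 1)) → ℝ} (hf : f ∈ reluClass dm ω (k + 1)) :
    ∃ W : AugMatrix (Fin (dm (k + 1))) (Fin (dm k)), ‖W‖ ≤ ω k ∧
      ∃ g ∈ reluClass dm ω k, ∀ x, f x = reluLayer W (g x) := by
  obtain ⟨A, b, hAb, rfl⟩ := hf
  exact ⟨augmentedMatrix (A k) (b k), norm_augmentedMatrix_le hω (hAb k k.lt_succ_self),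
    reluNet dm A b k, ⟨A, b, fun i hi => hAb i (hi.trans k.lt_succ_self), rfl⟩,
    reluNet_succ dm A b k⟩

theorem reluClass_nonempty (dm : ℕ → ℕ) {ω : ℕ → ℝ} {k : ℕ} (hω : ∀ i < k, 0 ≤ ω i) :
    (reluClass dm ω k).Nonempty :=
  ⟨_, 0, 0, fun i hi r => by simpa using hω i hi, rfl⟩

theorem exists_cover_reluClass {dm : ℕ → ℕ} {ω : ℕ → ℝ} {k : ℕ} (hω : ∀ i < k, 1 ≤ ω i)
    {x : ι → Fin (dm 0) → ℝ} (hx : ‖x‖ ≤ 1) {ε : ℝ} (hε : 0 < ε) (hε1 : ε ≤ 1) :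
    ∃ T : Finset (ι → Fin (dm k) → ℝ),
      (#T : ℝ) ≤ (3 / ε) ^ ∑ i ∈ range k, dm (i + 1) * (dm i + 1) ∧
      (∀ t ∈ T, ‖t‖ ≤ ∏ i ∈ range k, ω i) ∧
      ∀ f ∈ reluClass dm ω k, ∃ t ∈ T, ‖(fun i => f (x i)) - t‖ ≤ k * ε * ∏ i ∈ range k, ω i := by
  induction k with
  | zero =>
    refine ⟨{x}, by simp, by simpa using hx, ?_⟩
    rintro _ ⟨A, b, -, rfl⟩
    exact ⟨x, by simp, by simp [reluNet]⟩
  | succ k ih =>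
    have hωk : 1 ≤ ω k := hω k k.lt_succ_self
    have hω' : ∀ i < k, 1 ≤ ω i := fun i hi => hω i (hi.trans k.lt_succ_self)
    obtain ⟨T, hcard, hT, hcover⟩ := ih hω'
    have hB : 1 ≤ ∏ i ∈ range k, ω i := one_le_prod fun i hi => hω' i (mem_range.1 hi)
    obtain ⟨T', hcard', hT', hcover'⟩ :=
      exists_cover_reluLayer (ρ := Fin (dm (k + 1))) hB hT (zero_lt_one.trans_le hωk) hε hε1
    refine ⟨T', ?_, fun t ht => ?_, fun f hf => ?_⟩
    · simp only [Fintype.card_fin] at hcard'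
      rw [sum_range_succ, pow_add, mul_comm]
      exact hcard'.trans (by gcongr)
    · rw [prod_range_succ, mul_comm]
      exact hT' t ht
    · obtain ⟨W, hW, g, hg, hfg⟩ :=
        exists_reluLayer_of_mem_reluClass_succ (zero_le_one.trans hωk) hf
      obtain ⟨t, ht, hgt⟩ := hcover g hg
      obtain ⟨t', ht', hft'⟩ := hcover' W hW (fun i => g (x i)) t ht
      refine ⟨t', ht', ?_⟩
      simp only [hfg]
      calc _ ≤ ω k * (‖(fun i => g (x i)) - t‖ + ε * ∏ i ∈ range k, ω i) := hft'
        _ ≤ ω k * (k * ε * ∏ i ∈ range k, ω i + ε * ∏ i ∈ range k, ω i) := by gcongr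
        _ = (k + 1 : ℕ) * ε * ∏ i ∈ range (k + 1), ω i := by
          rw [prod_range_succ]
          push_cast
          ring

end Networks

section Loss

variable {ι κ : Type*} [Fintype ι] [Nonempty ι] [DecidableEq ι] [Fintype κ]

theorem empiricalRademacher_loss_le_of_cover {X : Type*} {F : Set (X → κ → ℝ)} (hF : F.Nonempty)
    (x : ι → X) {ℓ : ι → (κ → ℝ) → ℝ} {H K B δ : ℝ} (hK : 0 ≤ K)
    (hℓ : ∀ i u, ℓ i u ∈ Set.Icc 0 H) (hlip : ∀ i u v, |ℓ i u - ℓ i v| ≤ K * ‖u - v‖)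
    {T : Finset (ι → κ → ℝ)} (hT : ∀ t ∈ T, ‖t‖ ≤ B)
    (hcover : ∀ f ∈ F, ∃ t ∈ T, ‖(fun i => f (x i)) - t‖ ≤ δ) :
    empiricalRademacher ((fun f i => ℓ i (f (x i))) '' F) ≤
      min H (K * B) * √(2 * Real.log #T / Fintype.card ι) + K * δ := by
  classical
  let center : ι → ℝ := fun i => ℓ i 0
  let T' : Finset (ι → ℝ) := T.image fun t i => ℓ i (t i) - center i
  have hTne : T.Nonempty :=
    let ⟨f, hf⟩ := hF
    let ⟨t, ht, _⟩ := hcover f hf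
    ⟨t, ht⟩
  have hbound : ∀ t ∈ T', ∀ i, |t i| ≤ min H (K * B) := by
    refine forall_mem_image.2 fun t ht i => le_min ?_ ?_
    · exact abs_sub_le_of_nonneg_of_le (hℓ i _).1 (hℓ i _).2 (hℓ i _).1 (hℓ i _).2
    · refine (hlip i (t i) 0).trans (mul_le_mul_of_nonneg_left ?_ hK)
      rw [sub_zero]
      exact (norm_le_pi_norm t i).trans (hT t ht)
  have hcover' : ∀ v ∈ (fun f i => ℓ i (f (x i))) '' F,
      ∃ t ∈ T', ∀ i, |v i - (center i + t i)| ≤ K * δ := by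
    rintro _ ⟨f, hf, rfl⟩
    obtain ⟨t, ht, hft⟩ := hcover f hf
    refine ⟨_, mem_image_of_mem _ ht, fun i => ?_⟩
    rw [add_sub_cancel]
    exact (hlip i _ _).trans
      (mul_le_mul_of_nonneg_left ((norm_le_pi_norm ((fun i => f (x i)) - t) i).trans hft) hK)
  have ha : 0 ≤ min H (K * B) :=
    let ⟨t, ht⟩ := hTne.image _
    (abs_nonneg _).trans (hbound t ht (Classical.arbitrary ι))
  have hpos : (0 : ℝ) < #T' := Nat.cast_pos.2 (hTne.image _).card_pos
  have hcard : #T' ≤ #T := card_image_le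
  calc empiricalRademacher ((fun f i => ℓ i (f (x i))) '' F)
      ≤ empiricalRademacher (T' : Set (ι → ℝ)) + K * δ :=
        empiricalRademacher_le_add (hF.image _) center hcover'
    _ ≤ min H (K * B) * √(2 * Real.log #T' / Fintype.card ι) + K * δ := by
        gcongr
        exact empiricalRademacher_le_of_finset (hTne.image _) hbound
    _ ≤ min H (K * B) * √(2 * Real.log #T / Fintype.card ι) + K * δ := by
        gcongr

theorem mul_sqrt_add_div_le {α N n Λ : ℝ} (hα : 0 ≤ α) (hN : 1 ≤ N) (hn : 1 ≤ n) (hΛ : 1 ≤ Λ) :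
    α * √(2 * (N * Λ) / n) + α / n ≤ 3 * α * √(N / n) * √Λ := by
  have hsqrt : √(N / n) * √Λ = √(N * Λ / n) := by
    rw [← Real.sqrt_mul (by positivity), div_mul_eq_mul_div]
  have htwo : √(2 * (N * Λ) / n) ≤ 2 * √(N * Λ / n) := by
    rw [mul_div_assoc, Real.sqrt_mul zero_le_two]
    gcongr
    exact Real.sqrt_le_self_iff.2 (.inr one_le_two)
  have hone : 1 / n ≤ √(N * Λ / n) := by
    refine Real.le_sqrt_of_sq_le ?_
    calc (1 / n) ^ 2 ≤ 1 / n := pow_le_of_le_one (by positivity) (by bound) two_ne_zero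
      _ ≤ N * Λ / n := by
        gcongr
        exact one_le_mul_of_one_le_of_one_le hN hΛ
  calc α * √(2 * (N * Λ) / n) + α / n
      = α * (√(2 * (N * Λ) / n) + 1 / n) := by ring
    _ ≤ α * (2 * √(N * Λ / n) + √(N * Λ / n)) := by gcongr
    _ = 3 * α * √(N / n) * √Λ := by
      rw [mul_assoc (3 * α), hsqrt]
      ring

theorem one_le_inv_min_mul {H M : ℝ} (hH : 0 < H) (hM : 0 < M) : 1 ≤ (min H M)⁻¹ * M := by
  rw [inv_mul_eq_div, one_le_div (lt_min hH hM)]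
  exact min_le_right _ _

theorem one_le_sum_range_mul_succ {L : ℕ} (hL : 1 ≤ L) {dm : ℕ → ℕ} (hdm : 1 ≤ dm L) :
    1 ≤ ∑ i ∈ range L, dm (i + 1) * (dm i + 1) := by
  obtain ⟨k, rfl⟩ := Nat.exists_eq_add_of_le' hL
  rw [sum_range_succ]
  exact (Nat.mul_pos hdm (Nat.succ_pos _)).trans_le (Nat.le_add_left _ _)

theorem rademacher_relu_network_general {L : ℕ} (hL : 1 ≤ L) {dm : ℕ → ℕ} (hdm : 1 ≤ dm L)
    {ω : ℕ → ℝ} (hω : ∀ i < L, 1 ≤ ω i) {x : ι → Fin (dm 0) → ℝ} (hx : ‖x‖ ≤ 1)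
    {ℓ : ι → (Fin (dm L) → ℝ) → ℝ} {H K : ℝ} (hH : 0 < H) (hK : 0 < K)
    (hℓ : ∀ i u, ℓ i u ∈ Set.Icc 0 H) (hlip : ∀ i u v, |ℓ i u - ℓ i v| ≤ K * ‖u - v‖)
    {α β : ℝ} (hα : α = min H (K * ∏ i ∈ range L, ω i))
    (hβ : β = α⁻¹ * (K * ∏ i ∈ range L, ω i)) :
    empiricalRademacher ((fun f i => ℓ i (f (x i))) '' reluClass dm ω L) ≤
      3 * α * √((∑ i ∈ range L, dm (i + 1) * (dm i + 1) : ℕ) / Fintype.card ι) *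
        √(Real.log (3 * L * β * Fintype.card ι)) := by
  set N : ℕ := ∑ i ∈ range L, dm (i + 1) * (dm i + 1)
  set n : ℝ := (Fintype.card ι : ℝ)
  have hprod : 1 ≤ ∏ i ∈ range L, ω i := one_le_prod fun i hi => hω i (mem_range.1 hi)
  have hα0 : 0 < α := hα ▸ lt_min hH (by positivity)
  have hβ1 : 1 ≤ β := hβ ▸ hα ▸ one_le_inv_min_mul hH (by positivity)
  have hL1 : (1 : ℝ) ≤ L := by exact_mod_cast hL
  have hn1 : 1 ≤ n := Nat.one_le_cast.2 Fintype.card_pos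
  have hLβn : 1 ≤ L * β * n := by bound
  have hlog : 1 ≤ Real.log (3 * L * β * n) := by
    rw [Real.le_log_iff_exp_le (by positivity)]
    linarith [Real.exp_one_lt_three]
  have hε : (L * β * n)⁻¹ ≤ 1 := inv_le_one_of_one_le₀ hLβn
  obtain ⟨T, hcard, hT, hcover⟩ := exists_cover_reluClass hω hx (by positivity) hε
  have hF : (reluClass dm ω L).Nonempty :=
    reluClass_nonempty dm fun i hi => zero_le_one.trans (hω i hi)
  have herror : K * (L * (L * β * n)⁻¹ * ∏ i ∈ range L, ω i) = α / n := by
    have : α * β = K * ∏ i ∈ range L, ω i := by rw [hβ, mul_inv_cancel_left₀ hα0.ne']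
    field_simp
    linear_combination - this
  have hentropy : Real.log #T ≤ N * Real.log (3 * L * β * n) := by
    obtain ⟨t, ht, -⟩ := hcover _ hF.some_mem
    rw [← Real.log_pow]
    refine Real.log_le_log (Nat.cast_pos.2 (card_pos.2 ⟨t, ht⟩)) ?_
    simpa only [div_inv_eq_mul, mul_assoc] using hcard
  calc empiricalRademacher ((fun f i => ℓ i (f (x i))) '' reluClass dm ω L)
      ≤ α * √(2 * Real.log #T / n) + α / n := by
        rw [← herror, hα]
        exact empiricalRademacher_loss_le_of_cover hF x hK.le hℓ hlip hT hcover
    _ ≤ α * √(2 * (N * Real.log (3 * L * β * n)) / n) + α / n := by gcongr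
    _ ≤ 3 * α * √(N / n) * √(Real.log (3 * L * β * n)) :=
        mul_sqrt_add_div_le hα0.le (Nat.one_le_cast.2 (one_le_sum_range_mul_succ hL hdm)) hn1 hlog

end Loss

theorem log_three_mul_le {L : ℕ} (hL : 1 ≤ L) {d : ℕ → ℕ} (hd : ∀ i < L, 2 ≤ d i) :
    Real.log (3 * L) ≤ 2 * ∑ i ∈ range L, Real.log (d i) := by
  have hbernoulli : (3 * L : ℝ) ≤ 4 ^ L := by
    linarith [one_add_mul_le_pow (a := (3 : ℝ)) (by norm_num) L,
      show (1 + 3 : ℝ) ^ L = 4 ^ L by norm_num]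
  have hlog_four : Real.log 4 = 2 * Real.log 2 := by
    rw [show (4 : ℝ) = 2 ^ 2 by norm_num, Real.log_pow, Nat.cast_ofNat]
  calc Real.log (3 * L) ≤ Real.log (4 ^ L) := Real.log_le_log (by positivity) hbernoulli
    _ = 2 * ∑ _i ∈ range L, Real.log 2 := by
      rw [Real.log_pow, hlog_four, sum_const, card_range, nsmul_eq_mul]
      ring
    _ ≤ 2 * ∑ i ∈ range L, Real.log (d i) := by
      gcongr with i hi
      exact_mod_cast hd i (mem_range.1 hi)

theorem log_three_mul_mul_mul_le {L : ℕ} (hL : 1 ≤ L) {d : ℕ → ℕ} (hd : ∀ i < L, 2 ≤ d i)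
    {β n : ℝ} (hβ : 1 ≤ β) (hn : 1 ≤ n) (z : ℝ) :
    Real.log (3 * L * β * n) ≤
      2 * (Real.log β + Real.log n + ∑ i ∈ range L, Real.log (d i) + L * logPlus z) := by
  have hlogPlus : 0 ≤ L * logPlus z := mul_nonneg L.cast_nonneg (le_max_left _ _)
  rw [Real.log_mul (by positivity) (by positivity), Real.log_mul (by positivity) (by positivity)]
  linarith [log_three_mul_le hL hd, Real.log_nonneg hβ, Real.log_nonneg hn]

theorem sqrt_sum_sub_sq_le {κ : Type*} [Fintype κ] (u v : κ → ℝ) :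
    √(∑ j, (u j - v j) ^ 2) ≤ √(Fintype.card κ) * ‖u - v‖ := by
  rw [← Real.sqrt_sq (norm_nonneg (u - v)), ← Real.sqrt_mul (Nat.cast_nonneg _), ← nsmul_eq_mul]
  refine Real.sqrt_le_sqrt (sum_le_card_nsmul _ _ _ fun j _ => ?_)
  exact sq_le_sq.2 ((norm_le_pi_norm (u - v) j).trans (le_abs_self _))

theorem sum_sSup_reluNet_eq_empiricalRademacher {dm : ℕ → ℕ} {ω : ℕ → ℝ} {L n : ℕ}
    (x : Fin n → Fin (dm 0) → ℝ) (ℓ : Fin n → (Fin (dm L) → ℝ) → ℝ) :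
    (2 ^ n : ℝ)⁻¹ * ∑ s : Fin n → Bool,
        sSup {v : ℝ |
          ∃ (A : ∀ i : ℕ, Matrix (Fin (dm (i + 1))) (Fin (dm i)) ℝ)
            (b : ∀ i : ℕ, Fin (dm (i + 1)) → ℝ),
            (∀ i < L, ∀ r, (∑ j, |A i r j|) + |b i r| ≤ ω i) ∧
            v = (1 / n) * ∑ i : Fin n,
                (if s i then (1 : ℝ) else -1) * ℓ i (reluNet dm A b L (x i))} =
      empiricalRademacher ((fun f i => ℓ i (f (x i))) '' reluClass dm ω L) := by
  rw [inv_mul_eq_div, empiricalRademacher, Fintype.expect_eq_sum_div_card, Fintype.card_fun,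
    Fintype.card_bool, Fintype.card_fin, Nat.cast_pow, Nat.cast_ofNat]
  refine congrArg (· / _) (sum_congr rfl fun s _ => congrArg sSup (Set.ext fun v => ?_))
  constructor
  · rintro ⟨A, b, hAb, rfl⟩
    exact ⟨_, ⟨_, ⟨A, b, hAb, rfl⟩, rfl⟩, by rw [signedMean, Fintype.card_fin]⟩
  · rintro ⟨_, ⟨_, ⟨A, b, hAb, rfl⟩, rfl⟩, rfl⟩
    exact ⟨A, b, hAb, by rw [signedMean, Fintype.card_fin]⟩

/-- Rademacher complexity bound for ReLU networks with `ℓ¹`-bounded rows: there is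
an absolute constant `C > 0` such that the empirical Rademacher complexity of the
class (composed with a bounded Lipschitz loss) over a sample of size `n` with
`‖xᵢ‖_∞ ≤ 1` is at most
`C·α·√(N/n)·(log β + log n + Σᵢ log dᵢ + L·log₊log₊(β·√(n/d_L)))^{1/2}`. -/
theorem rademacher_relu_network : ∃ C : ℝ, 0 < C ∧
    ∀ (L : ℕ), 1 ≤ L → ∀ (dm : ℕ → ℕ), (∀ i ≤ L, 2 ≤ dm i) →
    ∀ (ω : ℕ → ℝ), (∀ i < L, 2 ≤ ω i) →
    ∀ (Y : Type) (H : ℝ), 0 < H →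
    ∀ (ℓ : (Fin (dm L) → ℝ) → Y → ℝ) (Kℓ : ℝ), 0 < Kℓ →
      (∀ y u v, |ℓ u y - ℓ v y| ≤ Kℓ * Real.sqrt (∑ j, (u j - v j) ^ 2)) →
      (∀ u y, ℓ u y ∈ Set.Icc (0 : ℝ) H) →
    ∀ (n : ℕ), 1 ≤ n → ∀ (x : Fin n → Fin (dm 0) → ℝ) (y : Fin n → Y),
      (∀ i j, |x i j| ≤ 1) →
    ∀ (Npar : ℕ),
      Npar = ∑ i ∈ Finset.range L, dm (i + 1) * (dm i + 1) →
    ∀ (α β : ℝ),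
      α = min H (Kℓ * Real.sqrt (dm L) * ∏ i ∈ Finset.range L, ω i) →
      β = α⁻¹ * (Kℓ * Real.sqrt (dm L) * ∏ i ∈ Finset.range L, ω i) →
    (2 ^ n : ℝ)⁻¹ * ∑ s : Fin n → Bool,
        sSup {v : ℝ |
          ∃ (A : ∀ i : ℕ, Matrix (Fin (dm (i + 1))) (Fin (dm i)) ℝ)
            (b : ∀ i : ℕ, Fin (dm (i + 1)) → ℝ),
            (∀ i < L, ∀ rI : Fin (dm (i + 1)),
              (∑ j, |A i rI j|) + |b i rI| ≤ ω i) ∧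
            v = (1 / n) * ∑ i : Fin n,
                (if s i then (1 : ℝ) else -1) * ℓ (reluNet dm A b L (x i)) (y i)}
      ≤ C * α * Real.sqrt (Npar / (n : ℝ))
        * Real.sqrt (Real.log β + Real.log n
            + (∑ i ∈ Finset.range L, Real.log (dm (i + 1)))
            + L * logPlus (logPlus (β * Real.sqrt (n / (dm L : ℝ))))) := by
  refine ⟨3 * √2, by positivity, ?_⟩
  rintro L hL dm hdm ω hω Y H hH ℓ K hK hlip hval n hn x y hx _ rfl α β hα hβ
  have : NeZero n := ⟨by lia⟩
  have hω1 : ∀ i < L, 1 ≤ ω i := fun i hi => one_le_two.trans (hω i hi)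
  have hdL : 1 ≤ dm L := one_le_two.trans (hdm L le_rfl)
  have hx1 : ‖x‖ ≤ 1 := (pi_norm_le_iff_of_nonneg zero_le_one).2 fun i =>
    (pi_norm_le_iff_of_nonneg zero_le_one).2 (hx i)
  have hlip_sup : ∀ i u v, |ℓ u (y i) - ℓ v (y i)| ≤ K * √(dm L) * ‖u - v‖ := fun i u v => by
    grw [hlip, sqrt_sum_sub_sq_le, Fintype.card_fin, mul_assoc]
  have hprod : 1 ≤ ∏ i ∈ range L, ω i := one_le_prod fun i hi => hω1 i (mem_range.1 hi)
  have hβ1 : 1 ≤ β := hβ ▸ hα ▸ one_le_inv_min_mul hH (by positivity)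
  have hlog := log_three_mul_mul_mul_le hL (fun i hi => hdm (i + 1) hi) hβ1 (Nat.one_le_cast.2 hn)
    (logPlus (β * √(n / dm L)))
  have hα0 : 0 ≤ α := hα ▸ (lt_min hH (by positivity)).le
  rw [sum_sSup_reluNet_eq_empiricalRademacher x fun i u => ℓ u (y i)]
  grw [rademacher_relu_network_general hL hdL hω1 hx1 hH (by positivity) (fun i u => hval u (y i))
    hlip_sup hα hβ, Fintype.card_fin, hlog, Real.sqrt_mul zero_le_two]
  exact le_of_eq (by ring)
end
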